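/- arXiv:1607.06189 — 5 statements merged into one kernel-verified Lean document; each statement's English description precedes it below -/
import Mathlib

section
/- Let R be a Noetherian local ring and let X, Y be finitely generated R-modules. Then there is an isomorphism of R-modules stHom_R(X, ΩY) ≅ stHom_R(Ω^{-1}X, Y), natural in X and Y. -/
/-!
Common definitions: Cohen-Macaulay modules, isolated singularities, stable Hom,
syzygies, transposes, Auslander-Reiten sequences, and the Grothendieck-type groups
`G(CM(R))`, `Ex(CM(R))`, `AR(CM(R))` from the paper
"Syzygies of Cohen-Macaulay modules and Grothendieck groups".

Throughout, the maximal ideal of a local ring is realized as the Jacobson radical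
`(⊥ : Ideal R).jacobson` (for a local ring these coincide), which lets the definitions
make sense without a `IsLocalRing` instance argument.
-/

namespace Paper

/-- A regular local ring: a Noetherian local ring whose maximal ideal (= Jacobson radical
of `⊥`) can be generated by `dim A` elements. -/
def IsRegularLocalRing (A : Type) [CommRing A] : Prop :=
  IsNoetherianRing A ∧ IsLocalRing A ∧
    ∃ s : Finset A, Ideal.span (s : Set A) = (⊥ : Ideal A).jacobson ∧
      (s.card : WithBot ℕ∞) = ringKrullDim A

/-- `M` is a (maximal) Cohen-Macaulay `R`-module: it is finitely generated, and it is either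
zero or satisfies `depth M = dim R`, the latter being expressed by the existence of a weakly
`M`-regular sequence of length `dim R` consisting of elements of the maximal ideal
(equivalently, since `depth M ≤ dim R` always holds for nonzero finitely generated `M` over a
Noetherian local ring `R`). -/
def IsMCM (R : Type) [CommRing R] (M : Type) [AddCommGroup M] [Module R M] : Prop :=
  Module.Finite R M ∧ (Subsingleton M ∨
    ∃ rs : List R, (∀ x ∈ rs, x ∈ (⊥ : Ideal R).jacobson) ∧
      RingTheory.Sequence.IsWeaklyRegular M rs ∧
      (rs.length : WithBot ℕ∞) = ringKrullDim R)

/-- The local ring `R` has an isolated singularity: `R_p` is regular local for every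
prime `p` different from the maximal ideal. -/
def IsolatedSingularity (R : Type) [CommRing R] : Prop :=
  ∀ (p : Ideal R) (_ : p.IsPrime), p ≠ (⊥ : Ideal R).jacobson →
    IsRegularLocalRing (Localization p.primeCompl)

section StableHom

variable (R : Type) [CommRing R]

/-- The submodule of `Hom_R(M,N)` consisting of homomorphisms factoring through a
finitely generated free module. -/
def stSub (M N : Type) [AddCommGroup M] [Module R M] [AddCommGroup N] [Module R N] :
    Submodule R (M →ₗ[R] N) :=
  Submodule.span R {f | ∃ (n : ℕ) (g : M →ₗ[R] (Fin n → R)) (h : (Fin n → R) →ₗ[R] N),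
    f = h ∘ₗ g}

/-- The stable Hom module `stHom_R(M,N) = Hom_R(M,N)/{maps factoring through f.g. frees}`. -/
abbrev StHom (M N : Type) [AddCommGroup M] [Module R M] [AddCommGroup N] [Module R N] :=
  (M →ₗ[R] N) ⧸ stSub R M N

/-- The map `stHom_R(M,N) → stHom_R(M,N')` induced by postcomposition with `φ : N →ₗ[R] N'`. -/
def stMapLeft {M N N' : Type} [AddCommGroup M] [Module R M] [AddCommGroup N] [Module R N]
    [AddCommGroup N'] [Module R N'] (φ : N →ₗ[R] N') : StHom R M N →ₗ[R] StHom R M N' :=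
  Submodule.mapQ _ _ (LinearMap.llcomp R M N N' φ) (by
    rw [stSub, Submodule.span_le]
    rintro f ⟨n, g, h, rfl⟩
    exact Submodule.subset_span ⟨n, g, φ ∘ₗ h, rfl⟩)

/-- The map `stHom_R(M,N) → stHom_R(M',N)` induced by precomposition with `φ : M' →ₗ[R] M`. -/
def stMapRight {M M' N : Type} [AddCommGroup M] [Module R M] [AddCommGroup M'] [Module R M']
    [AddCommGroup N] [Module R N] (φ : M' →ₗ[R] M) : StHom R M N →ₗ[R] StHom R M' N :=
  Submodule.mapQ _ _ (LinearMap.lcomp R N φ) (by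
    rw [stSub, Submodule.span_le]
    rintro f ⟨n, g, h, rfl⟩
    exact Submodule.subset_span ⟨n, g ∘ₗ φ, h, rfl⟩)

end StableHom

section Syzygies

variable (R : Type) [CommRing R]

/-- `S` is (isomorphic to) a first syzygy of `M`: the kernel of a minimal free cover
`π : R^n → M` (minimality: `ker π ⊆ m·R^n`). -/
def IsSyzygyOf (S M : Type) [AddCommGroup S] [Module R S] [AddCommGroup M] [Module R M] :
    Prop :=
  ∃ (n : ℕ) (π : (Fin n → R) →ₗ[R] M), Function.Surjective π ∧
    LinearMap.ker π ≤ (⊥ : Ideal R).jacobson • (⊤ : Submodule R (Fin n → R)) ∧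
    Nonempty (S ≃ₗ[R] LinearMap.ker π)

/-- `S` belongs to `ΩCM(R)`: it is a first syzygy of some Cohen-Macaulay module. -/
def MemOmegaCM (S : Type) [AddCommGroup S] [Module R S] : Prop :=
  ∃ N : ModuleCat.{0} R, IsMCM R N ∧ IsSyzygyOf R S N

/-- `M` has a nonzero free direct summand. -/
def HasFreeSummand (M : Type) [AddCommGroup M] [Module R M] : Prop :=
  ∃ P : ModuleCat.{0} R, Nonempty (M ≃ₗ[R] (P × R))

/-- `M'` is the non-free part of `M`: it has no nonzero free direct summand and
`M ≅ M' ⊕ R^a` for some `a ≥ 0`. -/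
def IsNonfreePart (M M' : Type) [AddCommGroup M] [Module R M] [AddCommGroup M'] [Module R M'] :
    Prop :=
  ¬ HasFreeSummand R M' ∧ ∃ a : ℕ, Nonempty (M ≃ₗ[R] (M' × (Fin a → R)))

/-- `M` is an indecomposable module: nonzero, and in any decomposition `M ≅ P × Q`
one factor vanishes. -/
def Indecomp (M : Type) [AddCommGroup M] [Module R M] : Prop :=
  ¬ Subsingleton M ∧ ∀ (P Q : ModuleCat.{0} R), Nonempty (M ≃ₗ[R] (P × Q)) →
    Subsingleton P ∨ Subsingleton Q

/-- `A` is a direct summand of `B`. -/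
def IsSummandOf (A B : Type) [AddCommGroup A] [Module R A] [AddCommGroup B] [Module R B] :
    Prop :=
  ∃ C : ModuleCat.{0} R, Nonempty (B ≃ₗ[R] (A × C))

/-- A linear map is a split epimorphism if it has a right inverse. -/
def IsSplitEpi {M N : Type} [AddCommGroup M] [Module R M] [AddCommGroup N] [Module R N]
    (g : M →ₗ[R] N) : Prop :=
  ∃ s : N →ₗ[R] M, g ∘ₗ s = LinearMap.id

/-- `0 → A → B → C → 0` (given by `f`, `g`) is an Auslander-Reiten sequence: a non-split
short exact sequence of finitely generated modules with `A`, `C` indecomposable non-free,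
such that every non-split-epi map `X → C` from a finitely generated module factors
through `g : B → C`. -/
def IsARSequence {A B C : Type} [AddCommGroup A] [Module R A] [AddCommGroup B] [Module R B]
    [AddCommGroup C] [Module R C] (f : A →ₗ[R] B) (g : B →ₗ[R] C) : Prop :=
  Module.Finite R A ∧ Module.Finite R B ∧ Module.Finite R C ∧
  Function.Injective f ∧ Function.Surjective g ∧ Function.Exact f g ∧
  ¬ IsSplitEpi R g ∧
  Indecomp R A ∧ ¬ Module.Free R A ∧ Indecomp R C ∧ ¬ Module.Free R C ∧
  ∀ (X : ModuleCat.{0} R) (h : (X : Type) →ₗ[R] C), Module.Finite R X → ¬ IsSplitEpi R h →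
    ∃ l : (X : Type) →ₗ[R] B, g ∘ₗ l = h

/-- `R` is of finite CM type: finitely many isomorphism classes of indecomposable
Cohen-Macaulay modules. -/
def FiniteCMType : Prop :=
  ∃ L : List (ModuleCat.{0} R), ∀ U : ModuleCat.{0} R, IsMCM R U → Indecomp R U →
    ∃ V ∈ L, Nonempty ((U : Type) ≃ₗ[R] (V : Type))

/-- `R` is of finite ΩCM type: finitely many isomorphism classes of indecomposable
modules in `ΩCM(R)`. -/
def FiniteOmegaCMType : Prop :=
  ∃ L : List (ModuleCat.{0} R), ∀ U : ModuleCat.{0} R, Module.Finite R U → Indecomp R U →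
    MemOmegaCM R U → ∃ V ∈ L, Nonempty ((U : Type) ≃ₗ[R] (V : Type))

/-- There are only finitely many isomorphism classes of indecomposable direct summands of
first syzygies of Cohen-Macaulay `R`-modules. -/
def FiniteSyzygySummandType : Prop :=
  ∃ L : List (ModuleCat.{0} R), ∀ U : ModuleCat.{0} R, Module.Finite R U → Indecomp R U →
    (∃ S : ModuleCat.{0} R, MemOmegaCM R S ∧ IsSummandOf R (U : Type) S) →
    ∃ V ∈ L, Nonempty ((U : Type) ≃ₗ[R] (V : Type))

end Syzygies

section Grothendieck

variable (R : Type) [CommRing R]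

/-- The Cohen-Macaulay `R`-modules, as objects of `ModuleCat R`. -/
def CMMod := {M : ModuleCat.{0} R // IsMCM R M}

/-- The relations `[X] + [Z] - [Y]` with `Y ≅ X ⊕ Z`, defining `G(CM(R))` as a quotient
of the free abelian group on the Cohen-Macaulay modules. -/
def GRel : AddSubgroup (FreeAbelianGroup (CMMod R)) :=
  AddSubgroup.closure {a | ∃ X Z Y : CMMod R,
    Nonempty ((Y.1 : Type) ≃ₗ[R] ((X.1 : Type) × (Z.1 : Type))) ∧
    a = FreeAbelianGroup.of X + FreeAbelianGroup.of Z - FreeAbelianGroup.of Y}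

/-- The group `G(CM(R))`: the free abelian group on the isomorphism classes of
Cohen-Macaulay `R`-modules (realized as the free abelian group on all Cohen-Macaulay
modules modulo the direct sum relations). -/
abbrev GCM := FreeAbelianGroup (CMMod R) ⧸ GRel R

/-- The class of an element of the free abelian group in `G(CM(R))`. -/
def gcls : FreeAbelianGroup (CMMod R) →+ GCM R := QuotientAddGroup.mk' _

/-- The subgroup `Ex(CM(R))` of `G(CM(R))` generated by `[X]+[Z]-[Y]` coming from short
exact sequences `0 → Z → Y → X → 0` of Cohen-Macaulay modules. -/
def ExCM : AddSubgroup (GCM R) :=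
  AddSubgroup.closure {x | ∃ (X Z Y : CMMod R) (f : (Z.1 : Type) →ₗ[R] (Y.1 : Type))
    (g : (Y.1 : Type) →ₗ[R] (X.1 : Type)), Function.Injective f ∧ Function.Surjective g ∧
    Function.Exact f g ∧
    x = gcls R (FreeAbelianGroup.of X + FreeAbelianGroup.of Z - FreeAbelianGroup.of Y)}

/-- The subgroup `AR(CM(R))` of `G(CM(R))` generated by `[X]+[Z]-[Y]` coming from
Auslander-Reiten sequences `0 → Z → Y → X → 0` of Cohen-Macaulay modules. -/
def ARCM : AddSubgroup (GCM R) :=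
  AddSubgroup.closure {x | ∃ (X Z Y : CMMod R) (f : (Z.1 : Type) →ₗ[R] (Y.1 : Type))
    (g : (Y.1 : Type) →ₗ[R] (X.1 : Type)), IsARSequence R f g ∧
    x = gcls R (FreeAbelianGroup.of X + FreeAbelianGroup.of Z - FreeAbelianGroup.of Y)}

/-- The image of a subgroup `H ≤ G(CM(R))` in `G(CM(R)) ⊗_ℤ ℚ`: the `ℚ`-subspace spanned by
the image of `H`. The equality `ratSpan R (ExCM R) = ratSpan R (ARCM R)` expresses
`Ex(CM(R)) ⊗_ℤ ℚ = AR(CM(R)) ⊗_ℤ ℚ` inside `G(CM(R)) ⊗_ℤ ℚ`. -/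
def ratSpan (H : AddSubgroup (GCM R)) : Submodule ℚ (TensorProduct ℤ ℚ (GCM R)) :=
  Submodule.span ℚ {x | ∃ g ∈ H, x = (1 : ℚ) ⊗ₜ[ℤ] g}

end Grothendieck

section Transpose

variable (R : Type) [CommRing R]

/-- The data of a minimal free presentation `R^{n1} --d--> R^{n0} --p--> M → 0`. -/
structure PresData (M : Type) [AddCommGroup M] [Module R M] where
  n1 : ℕ
  n0 : ℕ
  d : (Fin n1 → R) →ₗ[R] (Fin n0 → R)
  p : (Fin n0 → R) →ₗ[R] M
  surj : Function.Surjective p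
  exact : LinearMap.range d = LinearMap.ker p
  min0 : LinearMap.ker p ≤ (⊥ : Ideal R).jacobson • (⊤ : Submodule R (Fin n0 → R))
  min1 : LinearMap.ker d ≤ (⊥ : Ideal R).jacobson • (⊤ : Submodule R (Fin n1 → R))

/-- The (Auslander) transpose determined by a minimal free presentation: the cokernel of
the dual map `(R^{n0})^* → (R^{n1})^*`. -/
abbrev TrOf {M : Type} [AddCommGroup M] [Module R M] (D : PresData R M) : Type :=
  Module.Dual R (Fin D.n1 → R) ⧸ LinearMap.range D.d.dualMap

/-- The data of a minimal free cover `p : R^n → M`. -/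
structure SyzData (M : Type) [AddCommGroup M] [Module R M] where
  n : ℕ
  p : (Fin n → R) →ₗ[R] M
  surj : Function.Surjective p
  min : LinearMap.ker p ≤ (⊥ : Ideal R).jacobson • (⊤ : Submodule R (Fin n → R))

/-- The first syzygy determined by a minimal free cover. -/
abbrev SyzOf {M : Type} [AddCommGroup M] [Module R M] (D : SyzData R M) : Type :=
  LinearMap.ker D.p

/-- The data needed to construct `Ω⁻¹ M = Tr Ω Tr M`. -/
structure CosyzData (M : Type) [AddCommGroup M] [Module R M] where
  P : PresData R M
  S : SyzData R (TrOf R P)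
  Q : PresData R (SyzOf R S)

/-- The cosyzygy `Ω⁻¹ M = Tr Ω Tr M` determined by the data `D`. -/
abbrev CosyzOf {M : Type} [AddCommGroup M] [Module R M] (D : CosyzData R M) : Type :=
  TrOf R D.Q

/-- The map `t : Tr M → Tr M'` represents the transpose `Tr φ` of `φ : M' → M`
(with respect to the chosen minimal presentations). -/
def RepresentsTr {M M' : Type} [AddCommGroup M] [Module R M] [AddCommGroup M'] [Module R M']
    (D : PresData R M) (D' : PresData R M') (φ : M' →ₗ[R] M)
    (t : TrOf R D →ₗ[R] TrOf R D') : Prop :=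
  ∃ (φ0 : (Fin D'.n0 → R) →ₗ[R] (Fin D.n0 → R)) (φ1 : (Fin D'.n1 → R) →ₗ[R] (Fin D.n1 → R)),
    D.p ∘ₗ φ0 = φ ∘ₗ D'.p ∧ D.d ∘ₗ φ1 = φ0 ∘ₗ D'.d ∧
    t ∘ₗ (LinearMap.range D.d.dualMap).mkQ = (LinearMap.range D'.d.dualMap).mkQ ∘ₗ φ1.dualMap

/-- The map `v : Ω Y → Ω Y'` represents the syzygy `Ω ψ` of `ψ : Y → Y'`
(with respect to the chosen minimal covers). -/
def RepresentsOmega {Y Y' : Type} [AddCommGroup Y] [Module R Y] [AddCommGroup Y'] [Module R Y']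
    (D : SyzData R Y) (D' : SyzData R Y') (ψ : Y →ₗ[R] Y')
    (v : SyzOf R D →ₗ[R] SyzOf R D') : Prop :=
  ∃ h : (Fin D.n → R) →ₗ[R] (Fin D'.n → R), D'.p ∘ₗ h = ψ ∘ₗ D.p ∧
    (LinearMap.ker D'.p).subtype ∘ₗ v = h ∘ₗ (LinearMap.ker D.p).subtype

/-- The map `w : Ω⁻¹ X' → Ω⁻¹ X` represents `Ω⁻¹ φ = Tr Ω Tr φ` for `φ : X' → X`. -/
def RepresentsOmegaInv {X X' : Type} [AddCommGroup X] [Module R X] [AddCommGroup X']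
    [Module R X'] (C : CosyzData R X) (C' : CosyzData R X') (φ : X' →ₗ[R] X)
    (w : CosyzOf R C' →ₗ[R] CosyzOf R C) : Prop :=
  ∃ (t : TrOf R C.P →ₗ[R] TrOf R C'.P) (v : SyzOf R C.S →ₗ[R] SyzOf R C'.S),
    RepresentsTr R C.P C'.P φ t ∧ RepresentsOmega R C.S C'.S t v ∧
    RepresentsTr R C'.Q C.Q v w

end Transpose

/-- `M` has injective dimension at most `n` as an `R`-module. -/
def InjDimLE (R : Type) [CommRing R] : ℕ → ModuleCat.{0} R → Prop
  | 0, M => Module.Injective R M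
  | n+1, M => ∃ (I : ModuleCat.{0} R) (f : (M : Type) →ₗ[R] (I : Type)),
      Module.Injective R I ∧ Function.Injective f ∧
      InjDimLE R n (ModuleCat.of R ((I : Type) ⧸ LinearMap.range f))

/-- A Gorenstein local ring: a Noetherian local ring of finite injective dimension as a
module over itself. -/
def IsGorensteinLocal (R : Type) [CommRing R] : Prop :=
  IsNoetherianRing R ∧ IsLocalRing R ∧ ∃ n : ℕ, InjDimLE R n (ModuleCat.of R R)

/-- The length of an `R`-module, expressed as the Krull dimension of its lattice of
submodules. -/
noncomputable def modLength (R M : Type) [CommRing R] [AddCommGroup M] [Module R M] :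
    WithBot ℕ∞ :=
  Order.krullDim (Submodule R M)

section Adj

set_option linter.unusedSectionVars false

open Module

variable {R : Type} [CommRing R]

theorem exists_factor {A B C : Type} [AddCommGroup A] [Module R A] [AddCommGroup B] [Module R B]
    [AddCommGroup C] [Module R C] (p : A →ₗ[R] B) (hp : Function.Surjective p) (k : A →ₗ[R] C)
    (hk : ∀ x, p x = 0 → k x = 0) : ∃ l : B →ₗ[R] C, l ∘ₗ p = k := by
  have h : LinearMap.ker p ≤ LinearMap.ker k := fun x hx => hk x hx
  refine ⟨(Submodule.liftQ _ k h) ∘ₗ (p.quotKerEquivOfSurjective hp).symm.toLinearMap, ?_⟩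
  ext x
  have : (p.quotKerEquivOfSurjective hp).symm (p x) = Submodule.Quotient.mk x := by
    rw [LinearEquiv.symm_apply_eq]; rfl
  simp [this]

theorem exists_lift {P A B C : Type} [AddCommGroup P] [Module R P] [Projective R P]
    [AddCommGroup A] [Module R A] [AddCommGroup B] [Module R B]
    [AddCommGroup C] [Module R C] (f : A →ₗ[R] B) (g : B →ₗ[R] C)
    (hfg : LinearMap.range f = LinearMap.ker g) (k : P →ₗ[R] B)
    (hk : ∀ x, g (k x) = 0) : ∃ l : P →ₗ[R] A, f ∘ₗ l = k := by
  have h : ∀ x, k x ∈ LinearMap.range f := fun x => by rw [hfg]; exact hk x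
  obtain ⟨l, hl⟩ := projective_lifting_property f.rangeRestrict (k.codRestrict _ h)
    f.surjective_rangeRestrict
  refine ⟨l, ?_⟩
  ext x
  have := congrArg Subtype.val (LinearMap.congr_fun hl x)
  simpa using this

theorem mem_stSub_of_free {M N A : Type} [AddCommGroup M] [Module R M] [AddCommGroup N]
    [Module R N] [AddCommGroup A] [Module R A] [Module.Free R A] [Module.Finite R A]
    (g : M →ₗ[R] A) (h : A →ₗ[R] N) : ∃ (n : ℕ) (g' : M →ₗ[R] (Fin n → R))
      (h' : (Fin n → R) →ₗ[R] N), h ∘ₗ g = h' ∘ₗ g' := by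
  rcases subsingleton_or_nontrivial R with hR | hR
  · have := Module.subsingleton R N
    refine ⟨0, 0, 0, ?_⟩
    ext x
    exact Subsingleton.elim _ _
  · let e := (Module.finBasis R A).equivFun
    refine ⟨_, e.toLinearMap ∘ₗ g, h ∘ₗ e.symm.toLinearMap, ?_⟩
    ext x
    simp

theorem mem_stSub {M N A : Type} [AddCommGroup M] [Module R M] [AddCommGroup N]
    [Module R N] [AddCommGroup A] [Module R A] [Module.Free R A] [Module.Finite R A]
    (g : M →ₗ[R] A) (h : A →ₗ[R] N) : h ∘ₗ g ∈ stSub R M N :=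
  Submodule.subset_span (mem_stSub_of_free g h)

theorem exists_of_mem_stSub {M N : Type} [AddCommGroup M] [Module R M] [AddCommGroup N]
    [Module R N] (f : M →ₗ[R] N) (hf : f ∈ stSub R M N) :
    ∃ (n : ℕ) (g : M →ₗ[R] (Fin n → R)) (h : (Fin n → R) →ₗ[R] N), f = h ∘ₗ g := by
  refine Submodule.span_induction (fun x hx => hx) ⟨0, 0, 0, by simp⟩ ?_ ?_ hf
  · rintro _ _ _ _ ⟨n, g, h, rfl⟩ ⟨n', g', h', rfl⟩
    obtain ⟨k, a, b, hab⟩ := mem_stSub_of_free (g.prod g') (h.coprod h')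
    refine ⟨k, a, b, ?_⟩
    rw [← hab]
    ext x
    simp
  · rintro a _ _ ⟨n, g, h, rfl⟩
    exact ⟨n, g, a • h, by ext x; simp⟩

theorem exists_equiv_of_rel {A B : Type} [AddCommGroup A] [Module R A] [AddCommGroup B]
    [Module R B] (A' : Submodule R A) (B' : Submodule R B) (S : Submodule R (A × B))
    (hl : ∀ a, ∃ b, (a, b) ∈ S) (hr : ∀ b, ∃ a, (a, b) ∈ S)
    (hS : ∀ a b, (a, b) ∈ S → (a ∈ A' ↔ b ∈ B')) :
    ∃ E : (A ⧸ A') ≃ₗ[R] (B ⧸ B'), ∀ a b, (a, b) ∈ S → E (A'.mkQ a) = B'.mkQ b := by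
  let f : S →ₗ[R] A ⧸ A' := A'.mkQ ∘ₗ LinearMap.fst R A B ∘ₗ S.subtype
  let g : S →ₗ[R] B ⧸ B' := B'.mkQ ∘ₗ LinearMap.snd R A B ∘ₗ S.subtype
  have hf : Function.Surjective f := by
    intro x
    obtain ⟨a, rfl⟩ := A'.mkQ_surjective x
    obtain ⟨b, hb⟩ := hl a
    exact ⟨⟨(a, b), hb⟩, rfl⟩
  have hg : Function.Surjective g := by
    intro x
    obtain ⟨b, rfl⟩ := B'.mkQ_surjective x
    obtain ⟨a, hb⟩ := hr b
    exact ⟨⟨(a, b), hb⟩, rfl⟩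
  have hk : LinearMap.ker f = LinearMap.ker g := by
    ext ⟨⟨a, b⟩, hab⟩
    simpa [f, g] using hS a b hab
  refine ⟨(f.quotKerEquivOfSurjective hf).symm ≪≫ₗ Submodule.quotEquivOfEq _ _ hk ≪≫ₗ
    g.quotKerEquivOfSurjective hg, fun a b hab => ?_⟩
  have : (f.quotKerEquivOfSurjective hf).symm (A'.mkQ a) =
      Submodule.Quotient.mk ⟨(a, b), hab⟩ := by
    rw [LinearEquiv.symm_apply_eq]; rfl
  rw [LinearEquiv.trans_apply, LinearEquiv.trans_apply, this]
  rfl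

/-- The predual of a map out of a dual. -/
noncomputable def bd {A B : Type} [AddCommGroup A] [Module R A] [IsReflexive R A]
    [AddCommGroup B] [Module R B] (b : Dual R A →ₗ[R] B) : Dual R B →ₗ[R] A :=
  (evalEquiv R A).symm.toLinearMap ∘ₗ b.dualMap

theorem apply_bd {A B : Type} [AddCommGroup A] [Module R A] [IsReflexive R A]
    [AddCommGroup B] [Module R B] (b : Dual R A →ₗ[R] B) (y : Dual R A) (γ : Dual R B) :
    y (bd b γ) = γ (b y) := by
  simp [bd]

theorem ext_dual {A : Type} [AddCommGroup A] [Module R A] [IsReflexive R A] {x y : A}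
    (h : ∀ φ : Dual R A, φ x = φ y) : x = y := by
  apply (evalEquiv R A).injective
  ext φ
  simpa using h φ

section Core

variable {X F1 F0 T N G1 G0 C : Type} [AddCommGroup X] [Module R X]
  [AddCommGroup F1] [Module R F1] [Module.Free R F1] [Module.Finite R F1]
  [AddCommGroup F0] [Module R F0] [Module.Free R F0] [Module.Finite R F0]
  [AddCommGroup T] [Module R T]
  [AddCommGroup N] [Module R N] [Module.Free R N] [Module.Finite R N]
  [AddCommGroup G1] [Module R G1] [Module.Free R G1] [Module.Finite R G1]
  [AddCommGroup G0] [Module R G0] [Module.Free R G0] [Module.Finite R G0]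
  [AddCommGroup C] [Module R C]

/-- Exactness of the two strands computing `Tr Ω Tr X`. -/
structure CoreData (d : F1 →ₗ[R] F0) (p : F0 →ₗ[R] X) (m : Dual R F1 →ₗ[R] T)
    (σ : N →ₗ[R] T) (q : G0 →ₗ[R] N) (e : G1 →ₗ[R] G0) (c : Dual R G1 →ₗ[R] C) : Prop where
  p_surj : Function.Surjective p
  d_p : LinearMap.range d = LinearMap.ker p
  m_surj : Function.Surjective m
  d_m : LinearMap.range d.dualMap = LinearMap.ker m
  σ_surj : Function.Surjective σ
  q_σ : LinearMap.range q = LinearMap.ker σ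
  e_q : LinearMap.range e = LinearMap.ker q
  c_surj : Function.Surjective c
  e_c : LinearMap.range e.dualMap = LinearMap.ker c

variable {d : F1 →ₗ[R] F0} {p : F0 →ₗ[R] X} {m : Dual R F1 →ₗ[R] T}
    {σ : N →ₗ[R] T} {q : G0 →ₗ[R] N} {e : G1 →ₗ[R] G0} {c : Dual R G1 →ₗ[R] C}


theorem zero_of_range {A B C : Type} [AddCommGroup A] [Module R A] [AddCommGroup B] [Module R B]
    [AddCommGroup C] [Module R C] {f : A →ₗ[R] B} {g : B →ₗ[R] C}
    (h : LinearMap.range f = LinearMap.ker g) (x : A) : g (f x) = 0 := by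
  have : f x ∈ LinearMap.ker g := h ▸ LinearMap.mem_range_self f x
  exact this

theorem ex_of_zero {A B C : Type} [AddCommGroup A] [Module R A] [AddCommGroup B] [Module R B]
    [AddCommGroup C] [Module R C] {f : A →ₗ[R] B} {g : B →ₗ[R] C}
    (h : LinearMap.range f = LinearMap.ker g) (y : B) (hy : g y = 0) : ∃ x, f x = y := by
  have : y ∈ LinearMap.range f := h ▸ hy
  exact this

theorem CoreData.exists_b (H : CoreData d p m σ q e c) :
    ∃ (a : Dual R F1 →ₗ[R] N) (b : Dual R F0 →ₗ[R] G0),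
      σ ∘ₗ a = m ∧ q ∘ₗ b = a ∘ₗ d.dualMap := by
  obtain ⟨a, ha⟩ := projective_lifting_property σ m H.σ_surj
  obtain ⟨b, hb⟩ := exists_lift q σ H.q_σ (a ∘ₗ d.dualMap) (fun x => by
    have := LinearMap.congr_fun ha (d.dualMap x)
    simp only [LinearMap.comp_apply] at this ⊢
    rw [this, zero_of_range H.d_m])
  exact ⟨a, b, ha, hb⟩

theorem CoreData.exists_b' (H : CoreData d p m σ q e c) :
    ∃ (a' : N →ₗ[R] Dual R F1) (b' : G0 →ₗ[R] Dual R F0),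
      m ∘ₗ a' = σ ∧ d.dualMap ∘ₗ b' = a' ∘ₗ q := by
  obtain ⟨a, ha⟩ := projective_lifting_property m σ H.m_surj
  obtain ⟨b, hb⟩ := exists_lift d.dualMap m H.d_m (a ∘ₗ q) (fun x => by
    have := LinearMap.congr_fun ha (q x)
    simp only [LinearMap.comp_apply] at this ⊢
    rw [this, zero_of_range H.q_σ])
  exact ⟨a, b, ha, hb⟩

/-- `k ∘ u` extends along `e*`. -/
theorem CoreData.extend (H : CoreData d p m σ q e c)
    {a : Dual R F1 →ₗ[R] N} {b : Dual R F0 →ₗ[R] G0}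
    (hb : q ∘ₗ b = a ∘ₗ d.dualMap) {n : ℕ} (k : X →ₗ[R] (Fin n → R)) :
    ∃ l : Dual R G1 →ₗ[R] (Fin n → R), ∀ γ, l (e.dualMap γ) = k (p (bd b γ)) := by
  have h : ∀ i, ∃ y, e y = b (LinearMap.proj i ∘ₗ k ∘ₗ p) := fun i => by
    apply ex_of_zero H.e_q
    have := LinearMap.congr_fun hb (LinearMap.proj i ∘ₗ k ∘ₗ p)
    simp only [LinearMap.comp_apply] at this
    rw [this]
    have h0 : d.dualMap (LinearMap.proj i ∘ₗ k ∘ₗ p) = 0 := by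
      ext x
      simp [zero_of_range H.d_p]
    rw [h0, map_zero]
  choose y hy using h
  refine ⟨LinearMap.pi fun i => Dual.eval R G1 (y i), fun γ => ?_⟩
  ext i
  simp only [LinearMap.pi_apply, Dual.eval_apply, LinearMap.dualMap_apply, hy]
  rw [← apply_bd]
  rfl

/-- The map `α`, with `α u ≡ e*` and `u β ≡ p`. -/
theorem CoreData.exists_alpha (H : CoreData d p m σ q e c)
    {a : Dual R F1 →ₗ[R] N} {b : Dual R F0 →ₗ[R] G0} (ha : σ ∘ₗ a = m)
    (hb : q ∘ₗ b = a ∘ₗ d.dualMap) :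
    ∃ (α : X →ₗ[R] Dual R G1) (β : F0 →ₗ[R] Dual R G0) (r : Dual R G1 →ₗ[R] Dual R G0)
      (θ : X →ₗ[R] F0),
      (∀ z, α (p z) = e.dualMap (β z)) ∧
      (∀ γ, α (p (bd b γ)) = e.dualMap γ + e.dualMap (r (e.dualMap γ))) ∧
      (∀ z, p (bd b (β z)) = p z + p (θ (p z))) := by
  obtain ⟨a', b', ha', hb'⟩ := H.exists_b'
  replace ha := fun x => LinearMap.congr_fun ha x
  replace ha' := fun x => LinearMap.congr_fun ha' x
  replace hb := fun x => LinearMap.congr_fun hb x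
  replace hb' := fun x => LinearMap.congr_fun hb' x
  simp only [LinearMap.comp_apply] at ha ha' hb hb'
  obtain ⟨s, hs⟩ := exists_lift q σ H.q_σ (a ∘ₗ a' - LinearMap.id) (fun x => by
    simp [ha, ha'])
  replace hs := fun x => LinearMap.congr_fun hs x
  simp only [LinearMap.comp_apply, LinearMap.sub_apply, LinearMap.id_apply] at hs
  obtain ⟨r, hr⟩ := exists_lift e q H.e_q (b ∘ₗ b' - LinearMap.id - s ∘ₗ q) (fun x => by
    simp [hb, hb', hs])
  replace hr := fun x => LinearMap.congr_fun hr x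
  simp only [LinearMap.comp_apply, LinearMap.sub_apply, LinearMap.id_apply] at hr
  obtain ⟨s', hs'⟩ := exists_lift d.dualMap m H.d_m (a' ∘ₗ a - LinearMap.id) (fun x => by
    simp [ha, ha'])
  replace hs' := fun x => LinearMap.congr_fun hs' x
  simp only [LinearMap.comp_apply, LinearMap.sub_apply, LinearMap.id_apply] at hs'
  let t : Dual R F0 →ₗ[R] Dual R F0 := b' ∘ₗ b - LinearMap.id - s' ∘ₗ d.dualMap
  have ht : ∀ y, d.dualMap (t y) = 0 := fun y => by
    simp only [t, LinearMap.comp_apply, LinearMap.sub_apply, LinearMap.id_apply, map_sub, hb', hb,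
      hs']
    abel
  obtain ⟨α, hα⟩ := exists_factor p H.p_surj (e.dualMap ∘ₗ b'.flip) (fun x hx => by
    obtain ⟨w, rfl⟩ := ex_of_zero H.d_p x hx
    ext g
    have h1 := LinearMap.congr_fun (hb' (e g)) w
    rw [zero_of_range H.e_q, map_zero] at h1
    simpa using h1)
  obtain ⟨θ, hθ⟩ := exists_factor p H.p_surj (bd t ∘ₗ Dual.eval R F0) (fun x hx => by
    obtain ⟨w, rfl⟩ := ex_of_zero H.d_p x hx
    apply ext_dual (R := R)
    intro φ
    rw [LinearMap.comp_apply, apply_bd, map_zero, Dual.eval_apply]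
    exact LinearMap.congr_fun (ht φ) w)
  replace hα := fun x => LinearMap.congr_fun hα x
  replace hθ := fun x => LinearMap.congr_fun hθ x
  simp only [LinearMap.comp_apply] at hα hθ
  refine ⟨α, b'.flip, r.dualMap, θ, hα, fun γ => ?_, fun z => ?_⟩
  · rw [hα]
    ext g
    have h2 : b (b' (e g)) = e g + e (r (e g)) := by
      rw [hr, zero_of_range H.e_q, map_zero]; abel
    simp only [LinearMap.dualMap_apply, LinearMap.flip_apply, LinearMap.add_apply]
    rw [apply_bd, h2, map_add]
  · have h3 : bd b (b'.flip z) = z + d (bd s' (Dual.eval R F0 z)) + θ (p z) := by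
      rw [hθ]
      apply ext_dual (R := R)
      intro y
      rw [apply_bd, map_add, map_add, apply_bd, ← LinearMap.dualMap_apply d y, apply_bd]
      simp [t]
    rw [h3, map_add, map_add, zero_of_range H.d_p, add_zero]

variable {Y F : Type} [AddCommGroup Y] [Module R Y] {n : ℕ}

/-- The relation defining the adjunction. -/
def AdjRel (p : F0 →ₗ[R] X) (e : G1 →ₗ[R] G0) (c : Dual R G1 →ₗ[R] C)
    (b : Dual R F0 →ₗ[R] G0) (π : (Fin n → R) →ₗ[R] Y) :
    Submodule R ((X →ₗ[R] LinearMap.ker π) × (C →ₗ[R] Y)) where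
  carrier := {fg | ∃ g' : Dual R G1 →ₗ[R] (Fin n → R), (∀ x, π (g' x) = fg.2 (c x)) ∧
    ∀ γ, g' (e.dualMap γ) = (fg.1 (p (bd b γ)) : Fin n → R)}
  add_mem' := by
    rintro ⟨f, g⟩ ⟨f', g'⟩ ⟨l, h1, h2⟩ ⟨l', h1', h2'⟩
    exact ⟨l + l', fun x => by simp [h1, h1'], fun γ => by
      simp only [LinearMap.add_apply, h2, h2']; simp⟩
  zero_mem' := ⟨0, by simp, by simp⟩
  smul_mem' := by
    rintro a ⟨f, g⟩ ⟨l, h1, h2⟩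
    exact ⟨a • l, fun x => by simp [h1], fun γ => by
      simp only [LinearMap.smul_apply, h2]; simp⟩

theorem CoreData.exists_equiv (H : CoreData d p m σ q e c)
    {a : Dual R F1 →ₗ[R] N} {b : Dual R F0 →ₗ[R] G0} (ha : σ ∘ₗ a = m)
    (hb : q ∘ₗ b = a ∘ₗ d.dualMap) (π : (Fin n → R) →ₗ[R] Y) (hπ : Function.Surjective π) :
    ∃ E : StHom R X (LinearMap.ker π) ≃ₗ[R] StHom R C Y,
      ∀ f g, (f, g) ∈ AdjRel p e c b π → E ((stSub R _ _).mkQ f) = (stSub R _ _).mkQ g := by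
  obtain ⟨α, β, r, θ, hα, hαu, huβ⟩ := H.exists_alpha ha hb
  have hcα : ∀ x, c (α x) = 0 := fun x => by
    obtain ⟨z, rfl⟩ := H.p_surj x
    rw [hα, zero_of_range H.e_c]
  apply exists_equiv_of_rel
  · intro f
    obtain ⟨l, hl⟩ := H.extend hb ((LinearMap.ker π).subtype ∘ₗ f)
    obtain ⟨g, hg⟩ := exists_factor c H.c_surj (π ∘ₗ l) (fun x hx => by
      obtain ⟨γ, rfl⟩ := ex_of_zero H.e_c x hx
      rw [LinearMap.comp_apply, hl]
      exact (f (p (bd b γ))).2)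
    exact ⟨g, l, fun x => (LinearMap.congr_fun hg x).symm, hl⟩
  · intro g
    obtain ⟨l, hl⟩ := projective_lifting_property π (g ∘ₗ c) hπ
    replace hl := fun x => LinearMap.congr_fun hl x
    simp only [LinearMap.comp_apply] at hl
    refine ⟨(l ∘ₗ α).codRestrict _ (fun x => ?_), l + l ∘ₗ e.dualMap ∘ₗ r, fun x => ?_,
      fun γ => ?_⟩
    · simp [hl, hcα]
    · have := zero_of_range H.e_c (r x)
      simp only [LinearMap.add_apply, LinearMap.comp_apply, map_add, hl, this, map_zero, add_zero]
    · simp only [LinearMap.add_apply, LinearMap.comp_apply, LinearMap.codRestrict_apply, hαu,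
        map_add]
  · rintro f g ⟨l, hl1, hl2⟩
    dsimp only at hl1 hl2
    constructor
    · intro hf
      obtain ⟨k, f1, f2, rfl⟩ := exists_of_mem_stSub f hf
      obtain ⟨y, hy⟩ := H.extend hb f1
      obtain ⟨g', hg'⟩ := exists_factor c H.c_surj
        (l - (LinearMap.ker π).subtype ∘ₗ f2 ∘ₗ y) (fun x hx => by
          obtain ⟨γ, rfl⟩ := ex_of_zero H.e_c x hx
          simp only [LinearMap.sub_apply, LinearMap.comp_apply, hl2, hy]
          simp)
      have : g = π ∘ₗ g' := by
        ext x
        obtain ⟨x, rfl⟩ := H.c_surj x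
        have h4 := congrArg π (LinearMap.congr_fun hg' x)
        simp only [LinearMap.sub_apply, LinearMap.comp_apply, map_sub, hl1] at h4 ⊢
        rw [h4]
        simp
      rw [this]
      exact mem_stSub _ _
    · intro hg
      obtain ⟨k, g1, g2, rfl⟩ := exists_of_mem_stSub g hg
      obtain ⟨h, hh⟩ := projective_lifting_property π g2 hπ
      replace hh := fun x => LinearMap.congr_fun hh x
      simp only [LinearMap.comp_apply] at hh hl1
      let δ : Dual R G1 →ₗ[R] LinearMap.ker π := (l - h ∘ₗ g1 ∘ₗ c).codRestrict _ (fun x => by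
        simp [hl1, hh])
      have : f = δ ∘ₗ α - (f ∘ₗ p) ∘ₗ θ := by
        ext1 x
        obtain ⟨z, rfl⟩ := H.p_surj x
        apply Subtype.ext
        have h5 : ((δ (α (p z)) : LinearMap.ker π) : Fin n → R) = l (α (p z)) := by
          simp [δ, hcα]
        simp only [LinearMap.sub_apply, LinearMap.comp_apply, Submodule.coe_sub, h5]
        rw [hα, hl2, huβ, map_add, Submodule.coe_add, add_sub_cancel_right]
      rw [this]
      exact Submodule.sub_mem _ (mem_stSub _ _) (mem_stSub _ _)


theorem CoreData.exists_right (H : CoreData d p m σ q e c)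
    {a : Dual R F1 →ₗ[R] N} {b : Dual R F0 →ₗ[R] G0}
    (hb : q ∘ₗ b = a ∘ₗ d.dualMap) (π : (Fin n → R) →ₗ[R] Y) (f : X →ₗ[R] LinearMap.ker π) :
    ∃ g, (f, g) ∈ AdjRel p e c b π := by
  obtain ⟨l, hl⟩ := H.extend hb ((LinearMap.ker π).subtype ∘ₗ f)
  obtain ⟨g, hg⟩ := exists_factor c H.c_surj (π ∘ₗ l) (fun x hx => by
    obtain ⟨γ, rfl⟩ := ex_of_zero H.e_c x hx
    rw [LinearMap.comp_apply, hl]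
    exact (f (p (bd b γ))).2)
  exact ⟨g, l, fun x => (LinearMap.congr_fun hg x).symm, hl⟩

theorem rel_left {Y' : Type} [AddCommGroup Y'] [Module R Y'] {n' : ℕ}
    (p : F0 →ₗ[R] X) (e : G1 →ₗ[R] G0) (c : Dual R G1 →ₗ[R] C)
    (b : Dual R F0 →ₗ[R] G0) (π : (Fin n → R) →ₗ[R] Y) (π' : (Fin n' → R) →ₗ[R] Y')
    (ψ : Y →ₗ[R] Y') (v : LinearMap.ker π →ₗ[R] LinearMap.ker π')
    (k : (Fin n → R) →ₗ[R] (Fin n' → R)) (hk1 : π' ∘ₗ k = ψ ∘ₗ π)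
    (hk2 : (LinearMap.ker π').subtype ∘ₗ v = k ∘ₗ (LinearMap.ker π).subtype)
    (f : X →ₗ[R] LinearMap.ker π) (g : C →ₗ[R] Y) (h : (f, g) ∈ AdjRel p e c b π) :
    (v ∘ₗ f, ψ ∘ₗ g) ∈ AdjRel p e c b π' := by
  obtain ⟨l, hl1, hl2⟩ := h
  refine ⟨k ∘ₗ l, fun x => ?_, fun γ => ?_⟩
  · have := LinearMap.congr_fun hk1 (l x)
    simp only [LinearMap.comp_apply] at this hl1 ⊢
    rw [this, hl1]
  · have := LinearMap.congr_fun hk2 (f (p (bd b γ)))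
    simp only [LinearMap.comp_apply, Submodule.subtype_apply] at this hl2 ⊢
    rw [this, hl2]

theorem rel_right {X' F1' F0' T' N' G1' G0' C' : Type} [AddCommGroup X'] [Module R X']
    [AddCommGroup F1'] [Module R F1'] [Module.Free R F1'] [Module.Finite R F1']
    [AddCommGroup F0'] [Module R F0'] [Module.Free R F0'] [Module.Finite R F0']
    [AddCommGroup T'] [Module R T']
    [AddCommGroup N'] [Module R N'] [Module.Free R N'] [Module.Finite R N']
    [AddCommGroup G1'] [Module R G1'] [Module.Free R G1'] [Module.Finite R G1']
    [AddCommGroup G0'] [Module R G0'] [Module.Free R G0'] [Module.Finite R G0']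
    [AddCommGroup C'] [Module R C']
    {d' : F1' →ₗ[R] F0'} {p' : F0' →ₗ[R] X'} {m' : Dual R F1' →ₗ[R] T'}
    {σ' : N' →ₗ[R] T'} {q' : G0' →ₗ[R] N'} {e' : G1' →ₗ[R] G0'} {c' : Dual R G1' →ₗ[R] C'}
    (H : CoreData d p m σ q e c) (H' : CoreData d' p' m' σ' q' e' c')
    {a : Dual R F1 →ₗ[R] N} {b : Dual R F0 →ₗ[R] G0} (ha : σ ∘ₗ a = m)
    (hb : q ∘ₗ b = a ∘ₗ d.dualMap)
    {a' : Dual R F1' →ₗ[R] N'} {b' : Dual R F0' →ₗ[R] G0'} (ha' : σ' ∘ₗ a' = m')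
    (hb' : q' ∘ₗ b' = a' ∘ₗ d'.dualMap) (π : (Fin n → R) →ₗ[R] Y)
    (φ : X' →ₗ[R] X) (φ0 : F0' →ₗ[R] F0) (φ1 : F1' →ₗ[R] F1) (t : T →ₗ[R] T')
    (k : N →ₗ[R] N') (v0 : G0 →ₗ[R] G0') (v1 : G1 →ₗ[R] G1') (w : C' →ₗ[R] C)
    (hφ0 : p ∘ₗ φ0 = φ ∘ₗ p') (hφ1 : d ∘ₗ φ1 = φ0 ∘ₗ d') (ht : t ∘ₗ m = m' ∘ₗ φ1.dualMap)
    (hk1 : σ' ∘ₗ k = t ∘ₗ σ) (hv0 : q' ∘ₗ v0 = k ∘ₗ q) (hv1 : e' ∘ₗ v1 = v0 ∘ₗ e)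
    (hw : w ∘ₗ c' = c ∘ₗ v1.dualMap)
    (f : X →ₗ[R] LinearMap.ker π) (g : C →ₗ[R] Y) (h : (f, g) ∈ AdjRel p e c b π) :
    (f ∘ₗ φ, g ∘ₗ w) ∈ AdjRel p' e' c' b' π := by
  obtain ⟨l, hl1, hl2⟩ := h
  replace ha := fun x => LinearMap.congr_fun ha x
  replace ha' := fun x => LinearMap.congr_fun ha' x
  replace hb := fun x => LinearMap.congr_fun hb x
  replace hb' := fun x => LinearMap.congr_fun hb' x
  replace hφ0 := fun x => LinearMap.congr_fun hφ0 x
  replace hφ1 := fun x => LinearMap.congr_fun hφ1 x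
  replace ht := fun x => LinearMap.congr_fun ht x
  replace hk1 := fun x => LinearMap.congr_fun hk1 x
  replace hv0 := fun x => LinearMap.congr_fun hv0 x
  replace hv1 := fun x => LinearMap.congr_fun hv1 x
  replace hw := fun x => LinearMap.congr_fun hw x
  simp only [LinearMap.comp_apply] at ha ha' hb hb' hφ0 hφ1 ht hk1 hv0 hv1 hw hl1 hl2
  have hd : ∀ y, φ1.dualMap (d.dualMap y) = d'.dualMap (φ0.dualMap y) := fun y => by
    ext x
    simp only [LinearMap.dualMap_apply, hφ1]
  have he : ∀ γ, v1.dualMap (e'.dualMap γ) = e.dualMap (v0.dualMap γ) := fun y => by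
    ext x
    simp only [LinearMap.dualMap_apply, hv1]
  obtain ⟨s, hs⟩ := exists_lift _ _ H'.q_σ (k ∘ₗ a - a' ∘ₗ φ1.dualMap) (fun x => by
    simp only [LinearMap.sub_apply, LinearMap.comp_apply, map_sub]
    rw [hk1, ha, ha', ht, sub_self])
  replace hs := fun x => LinearMap.congr_fun hs x
  simp only [LinearMap.comp_apply, LinearMap.sub_apply] at hs
  obtain ⟨r, hr⟩ := exists_lift _ _ H'.e_q
    (v0 ∘ₗ b - b' ∘ₗ φ0.dualMap - s ∘ₗ d.dualMap) (fun x => by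
    simp only [LinearMap.sub_apply, LinearMap.comp_apply, map_sub, hs, hb']
    rw [hv0, hb, hd]
    abel)
  replace hr := fun x => LinearMap.congr_fun hr x
  simp only [LinearMap.comp_apply, LinearMap.sub_apply] at hr
  have key : ∀ γ, p (bd b (v0.dualMap γ)) =
      φ (p' (bd b' γ)) + p (bd r (e'.dualMap γ)) := fun γ => by
    have h6 : bd b (v0.dualMap γ) =
        φ0 (bd b' γ) + d (bd s γ) + bd r (e'.dualMap γ) := by
      apply ext_dual (R := R)
      intro y
      rw [apply_bd, map_add, map_add, apply_bd, ← LinearMap.dualMap_apply φ0 y,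
        ← LinearMap.dualMap_apply d y, apply_bd, apply_bd, LinearMap.dualMap_apply,
        LinearMap.dualMap_apply, hr, map_sub, map_sub]
      abel
    rw [h6, map_add, map_add, zero_of_range H.d_p, add_zero, hφ0]
  refine ⟨l ∘ₗ v1.dualMap - (LinearMap.ker π).subtype ∘ₗ f ∘ₗ p ∘ₗ bd r, fun x => ?_,
    fun γ => ?_⟩
  · have h7 : π (f (p (bd r x)) : Fin n → R) = 0 := (f (p (bd r x))).2
    simp only [LinearMap.sub_apply, LinearMap.comp_apply, map_sub, Submodule.subtype_apply, h7,
      sub_zero, hl1, hw]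
  · simp only [LinearMap.sub_apply, LinearMap.comp_apply, Submodule.subtype_apply]
    rw [he, hl2, key, map_add, Submodule.coe_add, add_sub_cancel_right]


theorem nat_left {Y' : Type} [AddCommGroup Y'] [Module R Y'] {n' : ℕ}
    (H : CoreData d p m σ q e c)
    {a : Dual R F1 →ₗ[R] N} {b : Dual R F0 →ₗ[R] G0}
    (hb : q ∘ₗ b = a ∘ₗ d.dualMap) (π : (Fin n → R) →ₗ[R] Y) (π' : (Fin n' → R) →ₗ[R] Y')
    (ψ : Y →ₗ[R] Y') (v : LinearMap.ker π →ₗ[R] LinearMap.ker π')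
    (k : (Fin n → R) →ₗ[R] (Fin n' → R)) (hk1 : π' ∘ₗ k = ψ ∘ₗ π)
    (hk2 : (LinearMap.ker π').subtype ∘ₗ v = k ∘ₗ (LinearMap.ker π).subtype)
    (E : StHom R X (LinearMap.ker π) ≃ₗ[R] StHom R C Y)
    (hE : ∀ f g, (f, g) ∈ AdjRel p e c b π → E ((stSub R _ _).mkQ f) = (stSub R _ _).mkQ g)
    (E' : StHom R X (LinearMap.ker π') ≃ₗ[R] StHom R C Y')
    (hE' : ∀ f g, (f, g) ∈ AdjRel p e c b π' →
      E' ((stSub R _ _).mkQ f) = (stSub R _ _).mkQ g) :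
    E'.toLinearMap ∘ₗ stMapLeft R (M := X) v = stMapLeft R (M := C) ψ ∘ₗ E.toLinearMap := by
  apply LinearMap.ext
  intro x
  obtain ⟨f, rfl⟩ := Submodule.mkQ_surjective _ x
  obtain ⟨g, hg⟩ := H.exists_right hb π f
  have h1 := hE f g hg
  have h2 := hE' _ _ (rel_left _ _ _ _ π π' ψ v k hk1 hk2 f g hg)
  rw [LinearMap.comp_apply, LinearMap.comp_apply, LinearEquiv.coe_coe, LinearEquiv.coe_coe, h1]
  exact h2

theorem nat_right {X' F1' F0' T' N' G1' G0' C' : Type} [AddCommGroup X'] [Module R X']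
    [AddCommGroup F1'] [Module R F1'] [Module.Free R F1'] [Module.Finite R F1']
    [AddCommGroup F0'] [Module R F0'] [Module.Free R F0'] [Module.Finite R F0']
    [AddCommGroup T'] [Module R T']
    [AddCommGroup N'] [Module R N'] [Module.Free R N'] [Module.Finite R N']
    [AddCommGroup G1'] [Module R G1'] [Module.Free R G1'] [Module.Finite R G1']
    [AddCommGroup G0'] [Module R G0'] [Module.Free R G0'] [Module.Finite R G0']
    [AddCommGroup C'] [Module R C']
    {d' : F1' →ₗ[R] F0'} {p' : F0' →ₗ[R] X'} {m' : Dual R F1' →ₗ[R] T'}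
    {σ' : N' →ₗ[R] T'} {q' : G0' →ₗ[R] N'} {e' : G1' →ₗ[R] G0'} {c' : Dual R G1' →ₗ[R] C'}
    (H : CoreData d p m σ q e c) (H' : CoreData d' p' m' σ' q' e' c')
    {a : Dual R F1 →ₗ[R] N} {b : Dual R F0 →ₗ[R] G0} (ha : σ ∘ₗ a = m)
    (hb : q ∘ₗ b = a ∘ₗ d.dualMap)
    {a' : Dual R F1' →ₗ[R] N'} {b' : Dual R F0' →ₗ[R] G0'} (ha' : σ' ∘ₗ a' = m')
    (hb' : q' ∘ₗ b' = a' ∘ₗ d'.dualMap) (π : (Fin n → R) →ₗ[R] Y)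
    (φ : X' →ₗ[R] X) (φ0 : F0' →ₗ[R] F0) (φ1 : F1' →ₗ[R] F1) (t : T →ₗ[R] T')
    (k : N →ₗ[R] N') (v0 : G0 →ₗ[R] G0') (v1 : G1 →ₗ[R] G1') (w : C' →ₗ[R] C)
    (hφ0 : p ∘ₗ φ0 = φ ∘ₗ p') (hφ1 : d ∘ₗ φ1 = φ0 ∘ₗ d') (ht : t ∘ₗ m = m' ∘ₗ φ1.dualMap)
    (hk1 : σ' ∘ₗ k = t ∘ₗ σ) (hv0 : q' ∘ₗ v0 = k ∘ₗ q) (hv1 : e' ∘ₗ v1 = v0 ∘ₗ e)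
    (hw : w ∘ₗ c' = c ∘ₗ v1.dualMap)
    (E : StHom R X (LinearMap.ker π) ≃ₗ[R] StHom R C Y)
    (hE : ∀ f g, (f, g) ∈ AdjRel p e c b π → E ((stSub R _ _).mkQ f) = (stSub R _ _).mkQ g)
    (E' : StHom R X' (LinearMap.ker π) ≃ₗ[R] StHom R C' Y)
    (hE' : ∀ f g, (f, g) ∈ AdjRel p' e' c' b' π →
      E' ((stSub R _ _).mkQ f) = (stSub R _ _).mkQ g) :
    E'.toLinearMap ∘ₗ stMapRight R (N := LinearMap.ker π) φ =
      stMapRight R (N := Y) w ∘ₗ E.toLinearMap := by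
  apply LinearMap.ext
  intro x
  obtain ⟨f, rfl⟩ := Submodule.mkQ_surjective _ x
  obtain ⟨g, hg⟩ := H.exists_right hb π f
  have h1 := hE f g hg
  have h2 := hE' _ _
    (rel_right H H' ha hb ha' hb' π φ φ0 φ1 t k v0 v1 w hφ0 hφ1 ht hk1 hv0 hv1 hw f g hg)
  rw [LinearMap.comp_apply, LinearMap.comp_apply, LinearEquiv.coe_coe, LinearEquiv.coe_coe, h1]
  exact h2

end Core

end Adj

section Concrete

open Module

variable {R : Type} [CommRing R]

theorem coreData {X : Type} [AddCommGroup X] [Module R X] (C : CosyzData R X) :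
    CoreData C.P.d C.P.p (LinearMap.range C.P.d.dualMap).mkQ C.S.p
      ((LinearMap.ker C.S.p).subtype ∘ₗ C.Q.p) C.Q.d (LinearMap.range C.Q.d.dualMap).mkQ where
  p_surj := C.P.surj
  d_p := C.P.exact
  m_surj := Submodule.mkQ_surjective _
  d_m := (Submodule.ker_mkQ _).symm
  σ_surj := C.S.surj
  q_σ := by
    rw [LinearMap.range_comp, LinearMap.range_eq_top.2 C.Q.surj, Submodule.map_top,
      Submodule.range_subtype]
  e_q := by
    rw [LinearMap.ker_comp_of_ker_eq_bot _ (Submodule.ker_subtype _)]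
    exact C.Q.exact
  c_surj := Submodule.mkQ_surjective _
  e_c := (Submodule.ker_mkQ _).symm

end Concrete

set_option synthInstance.maxHeartbeats 1000000 in
set_option maxHeartbeats 1000000 in
/-- Lemma 2.3. Over a Noetherian local ring there is an isomorphism
`stHom_R(X, ΩY) ≅ stHom_R(Ω⁻¹X, Y)`, natural in `X` and `Y`: one can choose the isomorphisms
`E X Y` (for all finitely generated `X`, `Y`, and for all choices of the data defining
`ΩY` and `Ω⁻¹X = Tr Ω Tr X`) so that they commute with the maps induced by any `ψ : Y → Y'`
(together with any representative `v` of `Ω ψ`) and by any `φ : X' → X` (together with any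
representative `w` of `Ω⁻¹ φ`). -/
@[deprecated]
theorem stHom_syzygy_adjunction
    (R : Type) [CommRing R] [IsNoetherianRing R] [IsLocalRing R] :
    ∃ E : ∀ (X Y : ModuleCat.{0} R), Module.Finite R X → Module.Finite R Y →
      (CX : CosyzData R (X : Type)) → (DY : SyzData R (Y : Type)) →
      (StHom R (X : Type) (SyzOf R DY) ≃ₗ[R] StHom R (CosyzOf R CX) (Y : Type)),
      (∀ (X Y Y' : ModuleCat.{0} R) (hX : Module.Finite R X) (hY : Module.Finite R Y)
        (hY' : Module.Finite R Y') (CX : CosyzData R (X : Type))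
        (DY : SyzData R (Y : Type)) (DY' : SyzData R (Y' : Type))
        (ψ : (Y : Type) →ₗ[R] (Y' : Type)) (v : SyzOf R DY →ₗ[R] SyzOf R DY'),
        RepresentsOmega R DY DY' ψ v →
          (E X Y' hX hY' CX DY').toLinearMap ∘ₗ stMapLeft R (M := (X : Type)) v =
            stMapLeft R (M := CosyzOf R CX) ψ ∘ₗ (E X Y hX hY CX DY).toLinearMap) ∧
      (∀ (X X' Y : ModuleCat.{0} R) (hX : Module.Finite R X) (hX' : Module.Finite R X')
        (hY : Module.Finite R Y) (CX : CosyzData R (X : Type))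
        (CX' : CosyzData R (X' : Type)) (DY : SyzData R (Y : Type))
        (φ : (X' : Type) →ₗ[R] (X : Type)) (w : CosyzOf R CX' →ₗ[R] CosyzOf R CX),
        RepresentsOmegaInv R CX CX' φ w →
          (E X' Y hX' hY CX' DY).toLinearMap ∘ₗ stMapRight R (N := SyzOf R DY) φ =
            stMapRight R (N := (Y : Type)) w ∘ₗ (E X Y hX hY CX DY).toLinearMap) := by
  classical
  have hB := fun (X : ModuleCat.{0} R) (C : CosyzData R (X : Type)) => (coreData C).exists_b
  choose a b ha hb using hB
  have hE := fun (X Y : ModuleCat.{0} R) (_ : Module.Finite R X) (_ : Module.Finite R Y)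
      (CX : CosyzData R (X : Type)) (DY : SyzData R (Y : Type)) =>
    (coreData CX).exists_equiv (ha X CX) (hb X CX) DY.p DY.surj
  choose E hE using hE
  refine ⟨E, ?_, ?_⟩
  · intro X Y Y' hX hY hY' CX DY DY' ψ v hv
    obtain ⟨k, hk1, hk2⟩ := hv
    exact nat_left (coreData CX) (hb X CX) DY.p DY'.p ψ v k hk1 hk2
      (E X Y hX hY CX DY) (hE X Y hX hY CX DY) (E X Y' hX hY' CX DY') (hE X Y' hX hY' CX DY')
  · intro X X' Y hX hX' hY CX CX' DY φ w hw
    obtain ⟨t, v, ⟨φ0, φ1, hφ0, hφ1, ht⟩, ⟨k, hk1, hk2⟩, ⟨v0, v1, hv0, hv1, hw⟩⟩ := hw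
    have hq : ((LinearMap.ker CX'.S.p).subtype ∘ₗ CX'.Q.p) ∘ₗ v0 =
        k ∘ₗ ((LinearMap.ker CX.S.p).subtype ∘ₗ CX.Q.p) := by
      rw [LinearMap.comp_assoc, hv0, ← LinearMap.comp_assoc, hk2, LinearMap.comp_assoc]
    exact nat_right (coreData CX) (coreData CX') (ha X CX) (hb X CX) (ha X' CX') (hb X' CX') DY.p
        φ φ0 φ1 t k v0 v1 w hφ0 hφ1 ht hk1 hq hv1 hw
        (E X Y hX hY CX DY) (hE X Y hX hY CX DY) (E X' Y hX' hY CX' DY) (hE X' Y hX' hY CX' DY)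


end Paper
end

section
/- Let (R, m, k) be a Cohen–Macaulay local ring with an isolated singularity and let M be a finitely generated R-module belonging to ΩCM(R). Then Ω^{-1}M is a Cohen–Macaulay R-module, and M is isomorphic to Ω Ω^{-1} M up to free direct summands, i.e., M ⊕ R^a ≅ Ω Ω^{-1} M ⊕ R^b for some non-negative integers a, b. -/
/-!
Common definitions: Cohen-Macaulay modules, isolated singularities, stable Hom,
syzygies, transposes, Auslander-Reiten sequences, and the Grothendieck-type groups
`G(CM(R))`, `Ex(CM(R))`, `AR(CM(R))` from the paper
"Syzygies of Cohen-Macaulay modules and Grothendieck groups".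

Throughout, the maximal ideal of a local ring is realized as the Jacobson radical
`(⊥ : Ideal R).jacobson` (for a local ring these coincide), which lets the definitions
make sense without a `IsLocalRing` instance argument.
-/

namespace Paper

section Helpers

open CategoryTheory CategoryTheory.Abelian

/-- Two surjections with the same kernel have isomorphic targets. -/
theorem aux_equiv_of_ker_eq {R X B B' : Type} [CommRing R] [AddCommGroup X] [Module R X]
    [AddCommGroup B] [Module R B] [AddCommGroup B'] [Module R B']
    (f : X →ₗ[R] B) (g : X →ₗ[R] B') (hf : Function.Surjective f) (hg : Function.Surjective g)
    (h : LinearMap.ker f = LinearMap.ker g) : Nonempty (B ≃ₗ[R] B') :=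
  ⟨(f.quotKerEquivOfSurjective hf).symm ≪≫ₗ (Submodule.quotEquivOfEq _ _ h) ≪≫ₗ
    g.quotKerEquivOfSurjective hg⟩

/-- Schanuel automorphism. -/
theorem aux_schanuel {R F F' W : Type} [CommRing R] [AddCommGroup F] [Module R F]
    [AddCommGroup F'] [Module R F'] [AddCommGroup W] [Module R W]
    [Module.Projective R F] [Module.Projective R F']
    (π : F →ₗ[R] W) (π' : F' →ₗ[R] W) (hπ : Function.Surjective π)
    (hπ' : Function.Surjective π') :
    ∃ e : (F × F') ≃ₗ[R] (F × F'), ∀ z, π' (e z).2 = π z.1 := by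
  obtain ⟨s, hs⟩ := Module.projective_lifting_property π π' hπ
  obtain ⟨t, ht⟩ := Module.projective_lifting_property π' π hπ'
  have hs' : ∀ y, π (s y) = π' y := fun y => LinearMap.congr_fun hs y
  have ht' : ∀ y, π' (t y) = π y := fun y => LinearMap.congr_fun ht y
  let α : (F × F') →ₗ[R] (F × F') :=
    (LinearMap.fst R F F' - s ∘ₗ LinearMap.snd R F F').prod (LinearMap.snd R F F')
  let α' : (F × F') →ₗ[R] (F × F') :=
    (LinearMap.fst R F F' + s ∘ₗ LinearMap.snd R F F').prod (LinearMap.snd R F F')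
  let β : (F × F') →ₗ[R] (F × F') :=
    (LinearMap.fst R F F').prod (LinearMap.snd R F F' + t ∘ₗ LinearMap.fst R F F')
  let β' : (F × F') →ₗ[R] (F × F') :=
    (LinearMap.fst R F F').prod (LinearMap.snd R F F' - t ∘ₗ LinearMap.fst R F F')
  let e1 : (F × F') ≃ₗ[R] (F × F') := LinearEquiv.ofLinearMap α α'
    (by ext z <;> simp [α, α']) (by ext z <;> simp [α, α'])
  let e2 : (F × F') ≃ₗ[R] (F × F') := LinearEquiv.ofLinearMap β β'
    (by ext z <;> simp [β, β']) (by ext z <;> simp [β, β'])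
  refine ⟨e1.trans e2, fun z => ?_⟩
  simp [e1, e2, α, β, hs', ht']

/-- Schanuel's lemma. -/
theorem aux_schanuel_ker {R F F' W : Type} [CommRing R] [AddCommGroup F] [Module R F]
    [AddCommGroup F'] [Module R F'] [AddCommGroup W] [Module R W]
    [Module.Projective R F] [Module.Projective R F']
    (π : F →ₗ[R] W) (π' : F' →ₗ[R] W) (hπ : Function.Surjective π)
    (hπ' : Function.Surjective π') :
    Nonempty ((LinearMap.ker π × F') ≃ₗ[R] (LinearMap.ker π' × F)) := by
  obtain ⟨e, he⟩ := aux_schanuel π π' hπ hπ'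
  have hs : ∀ z, π (e.symm z).1 = π' z.2 := fun z => by
    rw [← he, LinearEquiv.apply_symm_apply]
  let f : (LinearMap.ker π × F') →ₗ[R] (LinearMap.ker π' × F) :=
    (LinearMap.codRestrict (LinearMap.ker π')
      (LinearMap.snd R F F' ∘ₗ e.toLinearMap ∘ₗ
        ((LinearMap.ker π).subtype.prodMap LinearMap.id)) (by
          rintro ⟨z, y⟩
          have := z.2
          simp only [LinearMap.mem_ker] at this ⊢
          simp [he, this])).prod
      (LinearMap.fst R F F' ∘ₗ e.toLinearMap ∘ₗ
        ((LinearMap.ker π).subtype.prodMap LinearMap.id))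
  refine ⟨LinearEquiv.ofBijective f ⟨?_, ?_⟩⟩
  · rw [injective_iff_map_eq_zero]
    rintro ⟨⟨z, hz⟩, y⟩ h
    simp only [f, LinearMap.prod_apply, Function.prod, Prod.mk_eq_zero] at h
    have h1 : (e (z, y)).2 = 0 := congrArg Subtype.val h.1
    have h2 : (e (z, y)).1 = 0 := h.2
    have : e (z, y) = 0 := Prod.ext h2 h1
    rw [LinearEquiv.map_eq_zero_iff] at this
    simp only [Prod.mk_eq_zero] at this
    simp [this.1, this.2]
  · rintro ⟨⟨z, hz⟩, y⟩
    refine ⟨(⟨(e.symm (y, z)).1, by simpa [hs] using hz⟩, (e.symm (y, z)).2), ?_⟩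
    refine Prod.ext (Subtype.ext ?_) ?_
    · simp [f]
    · simp [f]

/-- Dual version of Schanuel. -/
theorem aux_dual_schanuel {R F F' W B B' : Type} [CommRing R] [AddCommGroup F] [Module R F]
    [AddCommGroup F'] [Module R F'] [AddCommGroup W] [Module R W]
    [AddCommGroup B] [Module R B] [AddCommGroup B'] [Module R B']
    [Module.Projective R F] [Module.Projective R F']
    (π : F →ₗ[R] W) (π' : F' →ₗ[R] W) (hπ : Function.Surjective π)
    (hπ' : Function.Surjective π')
    (q : Module.Dual R F →ₗ[R] B) (q' : Module.Dual R F' →ₗ[R] B')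
    (hq : Function.Surjective q) (hq' : Function.Surjective q')
    (hk : ∀ l, q l = 0 ↔ ∃ φ : Module.Dual R W, l = φ ∘ₗ π)
    (hk' : ∀ l, q' l = 0 ↔ ∃ φ : Module.Dual R W, l = φ ∘ₗ π') :
    Nonempty ((B × Module.Dual R F') ≃ₗ[R] (B' × Module.Dual R F)) := by
  obtain ⟨e, he⟩ := aux_schanuel π π' hπ hπ'
  have hs : ∀ z, π (e.symm z).1 = π' z.2 := fun z => by
    rw [← he, LinearEquiv.apply_symm_apply]
  let Q1 : Module.Dual R (F × F') →ₗ[R] (B × Module.Dual R F') :=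
    (q ∘ₗ (LinearMap.inl R F F').dualMap).prod (LinearMap.inr R F F').dualMap
  let Q2 : Module.Dual R (F × F') →ₗ[R] (B' × Module.Dual R F) :=
    (q' ∘ₗ (LinearMap.inr R F F').dualMap).prod (LinearMap.inl R F F').dualMap
  have hQ1 : Function.Surjective Q1 := by
    rintro ⟨b, m⟩
    obtain ⟨l, rfl⟩ := hq b
    refine ⟨l.coprod m, Prod.ext ?_ ?_⟩
    · exact congrArg q (by ext; simp)
    · ext; simp [Q1]
  have hQ2 : Function.Surjective Q2 := by
    rintro ⟨b, m⟩
    obtain ⟨l, rfl⟩ := hq' b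
    refine ⟨m.coprod l, Prod.ext ?_ ?_⟩
    · exact congrArg q' (by ext; simp)
    · ext; simp [Q2]
  have hk1 : ∀ l, Q1 l = 0 ↔ ∃ φ : Module.Dual R W, ∀ z, l z = φ (π z.1) := by
    intro l
    constructor
    · intro h
      simp only [Q1, LinearMap.prod_apply, Function.prod, Prod.mk_eq_zero, LinearMap.comp_apply] at h
      obtain ⟨φ, hφ⟩ := (hk _).1 h.1
      refine ⟨φ, fun z => ?_⟩
      have h1 := LinearMap.congr_fun hφ z.1
      have h2 := LinearMap.congr_fun h.2 z.2
      simp at h1 h2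
      rw [← h1, ← add_zero (l (z.1, 0)), ← h2, ← map_add]; simp
    · rintro ⟨φ, h⟩
      refine Prod.ext ((hk _).2 ⟨φ, ?_⟩) ?_
      · ext z; simp [h]
      · ext z; simp [Q1, h]
  have hk2 : ∀ l, Q2 l = 0 ↔ ∃ φ : Module.Dual R W, ∀ z, l z = φ (π' z.2) := by
    intro l
    constructor
    · intro h
      simp only [Q2, LinearMap.prod_apply, Function.prod, Prod.mk_eq_zero, LinearMap.comp_apply] at h
      obtain ⟨φ, hφ⟩ := (hk' _).1 h.1
      refine ⟨φ, fun z => ?_⟩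
      have h1 := LinearMap.congr_fun hφ z.2
      have h2 := LinearMap.congr_fun h.2 z.1
      simp at h1 h2
      rw [← h1, ← zero_add (l (0, z.2)), ← h2, ← map_add]; simp
    · rintro ⟨φ, h⟩
      refine Prod.ext ((hk' _).2 ⟨φ, ?_⟩) ?_
      · ext z; simp [h]
      · ext z; simp [Q2, h]
  refine aux_equiv_of_ker_eq (Q1 ∘ₗ e.dualMap.toLinearMap) Q2
    (hQ1.comp e.dualMap.surjective) hQ2 ?_
  ext l
  simp only [LinearMap.mem_ker, LinearMap.comp_apply, hk1, hk2]
  refine exists_congr fun φ => ?_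
  constructor
  · intro h z
    have := h (e.symm z)
    simpa [hs] using this
  · intro h z
    have := h (e z)
    simpa [he] using this

theorem aux_extend {R X L F : Type} [CommRing R] [Nontrivial R] [AddCommGroup X] [Module R X]
    [AddCommGroup L] [Module R L] [AddCommGroup F] [Module R F]
    [Module.Free R F] [Module.Finite R F] (i : X →ₗ[R] L)
    (h : ∀ f : X →ₗ[R] R, ∃ g : L →ₗ[R] R, ∀ x, g (i x) = f x) (f : X →ₗ[R] F) :
    ∃ g : L →ₗ[R] F, ∀ x, g (i x) = f x := by
  let b := Module.Free.chooseBasis R F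
  choose g hg using fun k => h (b.coord k ∘ₗ f)
  refine ⟨b.equivFun.symm.toLinearMap ∘ₗ LinearMap.pi g, fun x => ?_⟩
  apply b.equivFun.injective
  ext k
  simp [hg]

theorem aux_free_fin (R F : Type) [CommRing R] [Nontrivial R] [AddCommGroup F] [Module R F]
    [Module.Free R F] [Module.Finite R F] : ∃ a : ℕ, Nonempty (F ≃ₗ[R] (Fin a → R)) :=
  ⟨_, ⟨(Module.finBasis R F).equivFun⟩⟩

/-- The vanishing `Ext^i(k, X) = 0` for `i < d`. -/
def ExtVan (R : Type) [CommRing R] [IsLocalRing R] (d : ℕ) (X : Type) [AddCommGroup X]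
    [Module R X] : Prop :=
  ∀ i < d, Subsingleton (Ext (ModuleCat.of R (R ⧸ IsLocalRing.maximalIdeal R))
    (ModuleCat.of R X) i)

theorem aux_jac (R : Type) [CommRing R] [IsLocalRing R] :
    (⊥ : Ideal R).jacobson = IsLocalRing.maximalIdeal R :=
  IsLocalRing.jacobson_eq_maximalIdeal ⊥ bot_ne_top

theorem aux_smul_lt (R : Type) [CommRing R] [IsLocalRing R] (X : Type) [AddCommGroup X]
    [Module R X] [Module.Finite R X] [Nontrivial X] :
    IsLocalRing.maximalIdeal R • (⊤ : Submodule R X) < ⊤ := by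
  rw [lt_top_iff_ne_top]
  exact (Submodule.top_ne_ideal_smul_of_le_jacobson_annihilator
    (IsLocalRing.maximalIdeal_le_jacobson _)).symm

theorem aux_supp (R : Type) [CommRing R] [IsLocalRing R] :
    Module.support R (R ⧸ IsLocalRing.maximalIdeal R) =
      PrimeSpectrum.zeroLocus (IsLocalRing.maximalIdeal R) := by
  rw [Module.support_eq_zeroLocus, Ideal.annihilator_quotient]

theorem extVan_of_subsingleton {R : Type} [CommRing R] [IsLocalRing R]
    {X : Type} [AddCommGroup X] [Module R X] [Subsingleton X] (d : ℕ) : ExtVan R d X := by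
  intro i _
  have hz : 𝟙 (ModuleCat.of R X) = 0 := by
    ext x; exact Subsingleton.elim (α := X) _ _
  have key : ∀ a : Ext (ModuleCat.of R (R ⧸ IsLocalRing.maximalIdeal R)) (ModuleCat.of R X) i,
      a = 0 := by
    intro a
    rw [← Ext.comp_mk₀_id a, hz, Ext.mk₀_zero, Ext.comp_zero]
  exact ⟨fun a b => by rw [key a, key b]⟩

theorem extVan_of_isWeaklyRegular {R : Type} [CommRing R] [IsNoetherianRing R] [IsLocalRing R]
    {X : Type} [AddCommGroup X] [Module R X] [Module.Finite R X] (rs : List R)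
    (hrs : ∀ x ∈ rs, x ∈ (⊥ : Ideal R).jacobson)
    (h : RingTheory.Sequence.IsWeaklyRegular X rs) : ExtVan R rs.length X := by
  rw [aux_jac] at hrs
  cases subsingleton_or_nontrivial X with
  | inl hX => exact extVan_of_subsingleton _
  | inr hX =>
    refine ModuleCat.subsingleton_ext_of_exists_isRegular (IsLocalRing.maximalIdeal R)
      (ModuleCat.of R (R ⧸ IsLocalRing.maximalIdeal R)) (aux_supp R).subset
      (ModuleCat.of R X) (aux_smul_lt R X) rs hrs ?_
    exact (IsLocalRing.isRegular_iff_isWeaklyRegular_of_subset_maximalIdeal hrs).2 h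

theorem isMCM_of_extVan {R : Type} [CommRing R] [IsNoetherianRing R] [IsLocalRing R]
    {X : Type} [AddCommGroup X] [Module R X] [Module.Finite R X] (d : ℕ)
    (hd : (d : WithBot ℕ∞) = ringKrullDim R) (h : ExtVan R d X) : IsMCM R X := by
  refine ⟨inferInstance, ?_⟩
  cases subsingleton_or_nontrivial X with
  | inl hX => exact Or.inl hX
  | inr hX =>
    right
    obtain ⟨rs, hl, hm, hr⟩ := ModuleCat.exists_isRegular_of_exists_subsingleton_ext
      (IsLocalRing.maximalIdeal R) d (ModuleCat.of R X) (aux_smul_lt R X)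
      (ModuleCat.of R (R ⧸ IsLocalRing.maximalIdeal R)) (aux_supp R) h
    exact ⟨rs, by rwa [aux_jac], hr.toIsWeaklyRegular, by rw [hl, hd]⟩

theorem extVan_of_isMCM {R : Type} [CommRing R] [IsNoetherianRing R] [IsLocalRing R]
    {X : Type} [AddCommGroup X] [Module R X] (d : ℕ)
    (hd : (d : WithBot ℕ∞) = ringKrullDim R) (h : IsMCM R X) : ExtVan R d X := by
  obtain ⟨hf, h | ⟨rs, hm, hr, hl⟩⟩ := h
  · exact extVan_of_subsingleton d
  · rw [← hd] at hl
    have : rs.length = d := by exact_mod_cast hl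
    subst this
    exact extVan_of_isWeaklyRegular rs hm hr

theorem extVan_free {R : Type} [CommRing R] [IsNoetherianRing R] [IsLocalRing R]
    {X : Type} [AddCommGroup X] [Module R X] [Module.Finite R X] [Module.Free R X] (d : ℕ)
    (hd : (d : WithBot ℕ∞) = ringKrullDim R) (h : IsMCM R R) : ExtVan R d X := by
  obtain ⟨hf, h | ⟨rs, hm, hr, hl⟩⟩ := h
  · exact (not_subsingleton R h).elim
  · rw [← hd] at hl
    have : rs.length = d := by exact_mod_cast hl
    subst this
    refine extVan_of_isWeaklyRegular rs hm ?_
    have := RingTheory.Sequence.IsWeaklyRegular.isWeaklyRegular_rTensor (M₂ := X) hr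
    exact ((TensorProduct.lid R X).isWeaklyRegular_congr rs).1 this

theorem extVan_retract {R : Type} [CommRing R] [IsLocalRing R]
    {X Y : Type} [AddCommGroup X] [Module R X] [AddCommGroup Y] [Module R Y] (d : ℕ)
    (f : X →ₗ[R] Y) (g : Y →ₗ[R] X) (hfg : g ∘ₗ f = LinearMap.id) (h : ExtVan R d Y) :
    ExtVan R d X := by
  intro i hi
  have := h i hi
  have key : ∀ a : Ext (ModuleCat.of R (R ⧸ IsLocalRing.maximalIdeal R)) (ModuleCat.of R X) i,
      a = 0 := by
    intro a
    have e1 : ModuleCat.ofHom f ≫ ModuleCat.ofHom g = 𝟙 (ModuleCat.of R X) := by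
      rw [← ModuleCat.ofHom_comp, hfg]; rfl
    have e2 : (a.comp (Ext.mk₀ (ModuleCat.ofHom f)) (add_zero i)).comp
        (Ext.mk₀ (ModuleCat.ofHom g)) (add_zero i) = a := by
      rw [Ext.comp_assoc_of_third_deg_zero, Ext.mk₀_comp_mk₀, e1, Ext.comp_mk₀_id]
    rw [← e2, Subsingleton.elim (a.comp (Ext.mk₀ (ModuleCat.ofHom f)) (add_zero i)) 0,
      Ext.zero_comp]
  exact ⟨fun a b => by rw [key a, key b]⟩

theorem extVan_middle {R : Type} [CommRing R] [IsLocalRing R]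
    {X Y Z : Type} [AddCommGroup X] [Module R X] [AddCommGroup Y] [Module R Y]
    [AddCommGroup Z] [Module R Z] (d : ℕ)
    (f : X →ₗ[R] Y) (g : Y →ₗ[R] Z) (hf : Function.Injective f) (hg : Function.Surjective g)
    (hfg : Function.Exact f g) (hX : ExtVan R d X) (hZ : ExtVan R d Z) : ExtVan R d Y := by
  intro i hi
  have hX' := hX i hi
  have hZ' := hZ i hi
  let S : ShortComplex (ModuleCat.{0} R) := ShortComplex.mk (ModuleCat.ofHom f)
    (ModuleCat.ofHom g) (by
      ext x; exact hfg.apply_apply_eq_zero x)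
  have hS : S.ShortExact := by
    refine { exact := ?_, mono_f := ?_, epi_g := ?_ }
    · exact (ShortComplex.ShortExact.moduleCat_exact_iff_function_exact S).2 hfg
    · exact (ModuleCat.mono_iff_injective _).2 hf
    · exact (ModuleCat.epi_iff_surjective _).2 hg
  have := Ext.covariant_sequence_exact₂' (ModuleCat.of R (R ⧸ IsLocalRing.maximalIdeal R)) hS i
  exact AddCommGrpCat.subsingleton_of_isZero <| ShortComplex.Exact.isZero_of_both_zeros this
    ((AddCommGrpCat.isZero_of_iff_subsingleton.mpr hX').eq_zero_of_src _)
    ((AddCommGrpCat.isZero_of_iff_subsingleton.mpr hZ').eq_zero_of_tgt _)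

theorem extVan_cosyz {R : Type} [CommRing R] [IsLocalRing R]
    {X L C F N : Type} [AddCommGroup X] [Module R X] [AddCommGroup L] [Module R L]
    [AddCommGroup C] [Module R C] [AddCommGroup F] [Module R F]
    [AddCommGroup N] [Module R N] (d : ℕ)
    (i : X →ₗ[R] L) (c : L →ₗ[R] C) (hc : Function.Surjective c)
    (hic : Function.Exact i c) (j : X →ₗ[R] F) (π : F →ₗ[R] N) (hj : Function.Injective j)
    (hπ : Function.Surjective π) (hjπ : Function.Exact j π)
    (t : L →ₗ[R] F) (ht : ∀ x, t (i x) = j x)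
    (hL : ExtVan R d L) (hN : ExtVan R d N) : ExtVan R d C := by
  have hle : LinearMap.ker c ≤ LinearMap.ker (π ∘ₗ t) := by
    intro l hl
    obtain ⟨x, rfl⟩ := (hic l).1 hl
    simp [ht, hjπ.apply_apply_eq_zero]
  let v : C →ₗ[R] N := (LinearMap.ker c).liftQ (π ∘ₗ t) hle ∘ₗ
    (c.quotKerEquivOfSurjective hc).symm.toLinearMap
  have hv : ∀ l, v (c l) = π (t l) := by
    intro l
    have : (c.quotKerEquivOfSurjective hc).symm (c l) = (LinearMap.ker c).mkQ l := by
      rw [LinearEquiv.symm_apply_eq]; rfl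
    simp only [v, LinearMap.comp_apply, LinearEquiv.coe_coe, this]
    rfl
  refine extVan_retract d (LinearMap.inl R C F) (LinearMap.fst R C F) (by ext; rfl) ?_
  refine extVan_middle d (c.prod t) (v ∘ₗ LinearMap.fst R C F - π ∘ₗ LinearMap.snd R C F)
    ?_ ?_ ?_ hL hN
  · rw [injective_iff_map_eq_zero]
    intro l hl
    simp only [LinearMap.prod_apply, Function.prod, Prod.mk_eq_zero] at hl
    obtain ⟨x, rfl⟩ := (hic l).1 hl.1
    have h2 := hl.2
    rw [ht] at h2
    have : x = 0 := hj (by rw [h2, map_zero])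
    simp [this]
  · intro n
    obtain ⟨r, rfl⟩ := hπ n
    exact ⟨(0, -r), by simp⟩
  · rintro ⟨y, r⟩
    constructor
    · intro h
      obtain ⟨l, rfl⟩ := hc y
      simp only [LinearMap.sub_apply, LinearMap.comp_apply, LinearMap.fst_apply,
        LinearMap.snd_apply, hv, ← map_sub] at h
      obtain ⟨x, hx⟩ := (hjπ _).1 h
      refine ⟨l - i x, ?_⟩
      simp [hic.apply_apply_eq_zero, ht, hx]
    · rintro ⟨l, hl⟩
      simp only [LinearMap.prod_apply, Function.prod, Prod.mk.injEq] at hl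
      simp [← hl.1, ← hl.2, hv]

end Helpers

section Core

theorem aux_ker_Qd {R H0 H1 Z : Type} [CommRing R] [AddCommGroup H0] [Module R H0]
    [AddCommGroup H1] [Module R H1] [AddCommGroup Z] [Module R Z]
    (d : H1 →ₗ[R] H0) (p : H0 →ₗ[R] Z) (hp : Function.Surjective p)
    (hd : LinearMap.range d = LinearMap.ker p) (l : Module.Dual R H0) :
    d.dualMap l = 0 ↔ ∃ φ : Module.Dual R Z, l = φ ∘ₗ p := by
  constructor
  · intro h
    have hle : LinearMap.ker p ≤ LinearMap.ker l := by
      rw [← hd]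
      rintro _ ⟨x, rfl⟩
      exact LinearMap.congr_fun h x
    refine ⟨(LinearMap.ker p).liftQ l hle ∘ₗ
      (p.quotKerEquivOfSurjective hp).symm.toLinearMap, ?_⟩
    apply LinearMap.ext
    intro x
    have h2 : (p.quotKerEquivOfSurjective hp).symm (p x) = (LinearMap.ker p).mkQ x := by
      rw [LinearEquiv.symm_apply_eq]; rfl
    rw [LinearMap.comp_apply, LinearMap.comp_apply, LinearEquiv.coe_coe, h2]; rfl
  · rintro ⟨φ, rfl⟩
    apply LinearMap.ext
    intro x
    have : d x ∈ LinearMap.ker p := hd ▸ LinearMap.mem_range_self _ x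
    rw [LinearMap.dualMap_apply, LinearMap.comp_apply, LinearMap.mem_ker.1 this, map_zero,
      LinearMap.zero_apply]

theorem aux_ext_Mim {R H0 H1 Z : Type} [CommRing R] [AddCommGroup H0] [Module R H0]
    [AddCommGroup H1] [Module R H1] [AddCommGroup Z] [Module R Z]
    [Module.Free R H0] [Module.Finite R H0]
    (d : H1 →ₗ[R] H0) (p : H0 →ₗ[R] Z) (hp : Function.Surjective p)
    (hd : LinearMap.range d = LinearMap.ker p)
    (hZ : ∀ x : Z, (∀ χ : Module.Dual R Z, χ x = 0) → x = 0)
    (f : LinearMap.range d.dualMap →ₗ[R] R) :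
    ∃ g : Module.Dual R H1 →ₗ[R] R, ∀ x : LinearMap.range d.dualMap, g x = f x := by
  obtain ⟨h, hh⟩ := (Module.evalEquiv R H0).surjective (f ∘ₗ d.dualMap.rangeRestrict)
  have hF : ∀ ψ : Module.Dual R H0, ψ h = f (d.dualMap.rangeRestrict ψ) := by
    intro ψ
    have := LinearMap.congr_fun hh ψ
    exact this
  have hp0 : p h = 0 := by
    apply hZ
    intro χ
    have hz := hF (χ ∘ₗ p)
    have h0 : d.dualMap.rangeRestrict (χ ∘ₗ p) = 0 := by
      apply Subtype.ext
      exact (aux_ker_Qd d p hp hd _).2 ⟨χ, rfl⟩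
    rw [h0, map_zero] at hz
    exact hz
  have : h ∈ LinearMap.range d := by rw [hd]; exact hp0
  obtain ⟨x, hx⟩ := this
  refine ⟨Module.Dual.eval R _ x, ?_⟩
  rintro ⟨_, ψ, rfl⟩
  have := hF ψ
  rw [← hx] at this
  exact this

theorem aux_stable {R M E0 E1 G H0 H1 : Type} [CommRing R] [Nontrivial R]
    [AddCommGroup M] [Module R M] [AddCommGroup E0] [Module R E0] [AddCommGroup E1] [Module R E1]
    [AddCommGroup G] [Module R G] [AddCommGroup H0] [Module R H0] [AddCommGroup H1] [Module R H1]
    [Module.Free R E0] [Module.Finite R E0] [Module.Free R E1] [Module.Finite R E1]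
    [Module.Free R G] [Module.Finite R G] [Module.Free R H0] [Module.Finite R H0]
    (d : E1 →ₗ[R] E0) (p : E0 →ₗ[R] M) (hp : Function.Surjective p)
    (hd : LinearMap.range d = LinearMap.ker p)
    (s : G →ₗ[R] (Module.Dual R E1 ⧸ LinearMap.range d.dualMap)) (hs0 : Function.Surjective s)
    (dQ : H1 →ₗ[R] H0) (pQ : H0 →ₗ[R] LinearMap.ker s) (hpQ : Function.Surjective pQ)
    (hdQ : LinearMap.range dQ = LinearMap.ker pQ)
    (hM : ∀ x : M, (∀ χ : Module.Dual R M, χ x = 0) → x = 0) :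
    ∃ a b : ℕ, Nonempty ((LinearMap.range dQ.dualMap × (Fin a → R)) ≃ₗ[R] (M × (Fin b → R))) := by
  obtain ⟨e, he⟩ := aux_schanuel s (LinearMap.range d.dualMap).mkQ hs0
    (Submodule.mkQ_surjective _)
  have hs : ∀ z, s (e.symm z).1 = (LinearMap.range d.dualMap).mkQ z.2 := fun z => by
    rw [← he, LinearEquiv.apply_symm_apply]
  let π : (H0 × Module.Dual R E1) →ₗ[R] (LinearMap.ker s × Module.Dual R E1) :=
    pQ.prodMap LinearMap.id
  have hπa : ∀ x y, π (x, y) = (pQ x, y) := fun _ _ => rfl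
  let u : (Module.Dual R E0 × G) →ₗ[R] (G × Module.Dual R E1) :=
    e.symm.toLinearMap ∘ₗ (LinearMap.snd R (Module.Dual R E0) G).prod
      (d.dualMap ∘ₗ LinearMap.fst R (Module.Dual R E0) G)
  have hua : ∀ x y, u (x, y) = e.symm (y, d.dualMap x) := fun _ _ => rfl
  clear_value u
  have hu : ∀ z, s (u z).1 = 0 := by
    rintro ⟨x, y⟩
    rw [hua, hs, Submodule.mkQ_apply, Submodule.Quotient.mk_eq_zero]
    exact ⟨x, rfl⟩
  let π' : (Module.Dual R E0 × G) →ₗ[R] (LinearMap.ker s × Module.Dual R E1) :=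
    (LinearMap.codRestrict (LinearMap.ker s) (LinearMap.fst R G (Module.Dual R E1) ∘ₗ u) hu).prod
      (LinearMap.snd R G (Module.Dual R E1) ∘ₗ u)
  have hπ'1 : ∀ z, ((π' z).1 : G) = (u z).1 := fun _ => rfl
  have hπ'2 : ∀ z, (π' z).2 = (u z).2 := fun _ => rfl
  let q : Module.Dual R (H0 × Module.Dual R E1) →ₗ[R] LinearMap.range dQ.dualMap :=
    dQ.dualMap.rangeRestrict ∘ₗ (LinearMap.inl R H0 (Module.Dual R E1)).dualMap
  have hqa : ∀ l, (q l : Module.Dual R H1) = dQ.dualMap (l ∘ₗ LinearMap.inl R H0 (Module.Dual R E1)) :=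
    fun _ => rfl
  let q' : Module.Dual R (Module.Dual R E0 × G) →ₗ[R] M :=
    p ∘ₗ (Module.evalEquiv R E0).symm.toLinearMap ∘ₗ
      (LinearMap.inl R (Module.Dual R E0) G).dualMap
  have hq'a : ∀ l h, Module.evalEquiv R E0 h = l ∘ₗ LinearMap.inl R (Module.Dual R E0) G →
      q' l = p h := by
    intro l h hl
    refine congrArg p ?_
    exact (LinearEquiv.symm_apply_eq _).2 hl.symm
  clear_value π π' q q'
  have hπ : Function.Surjective π := by
    rintro ⟨x, y⟩
    obtain ⟨x, rfl⟩ := hpQ x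
    exact ⟨(x, y), hπa x y⟩
  have hπ' : Function.Surjective π' := by
    rintro ⟨⟨z, hz⟩, y⟩
    have h1 : (LinearMap.range d.dualMap).mkQ (e (z, y)).2 = 0 := by
      rw [he]; exact hz
    rw [Submodule.mkQ_apply, Submodule.Quotient.mk_eq_zero] at h1
    obtain ⟨ψ, hψ⟩ := h1
    have h2 : u (ψ, (e (z, y)).1) = (z, y) := by
      rw [hua, hψ, Prod.mk.eta, LinearEquiv.symm_apply_apply]
    refine ⟨(ψ, (e (z, y)).1), Prod.ext (Subtype.ext ?_) ?_⟩
    · rw [hπ'1, h2]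
    · rw [hπ'2, h2]
  have hq : Function.Surjective q := by
    rintro ⟨_, ψ, rfl⟩
    refine ⟨ψ ∘ₗ LinearMap.fst R H0 (Module.Dual R E1), Subtype.ext ?_⟩
    rw [hqa]
    rfl
  have hq' : Function.Surjective q' := by
    intro m
    obtain ⟨h, rfl⟩ := hp m
    exact ⟨(Module.evalEquiv R _ h) ∘ₗ LinearMap.fst R (Module.Dual R E0) G, hq'a _ _ rfl⟩
  have hk : ∀ l, q l = 0 ↔ ∃ φ : Module.Dual R (LinearMap.ker s × Module.Dual R E1),
      l = φ ∘ₗ π := by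
    intro l
    rw [Subtype.ext_iff, hqa, ZeroMemClass.coe_zero, aux_ker_Qd dQ pQ hpQ hdQ]
    constructor
    · rintro ⟨φ, hφ⟩
      refine ⟨φ.coprod (l ∘ₗ LinearMap.inr R H0 (Module.Dual R E1)), ?_⟩
      apply LinearMap.ext
      rintro ⟨x, y⟩
      have h2 : l (x, 0) = φ (pQ x) := LinearMap.congr_fun hφ x
      have h3 : l (x, y) = l (x, 0) + l (0, y) := by rw [← map_add]; simp
      rw [LinearMap.comp_apply, hπa, h3, h2]
      rfl
    · rintro ⟨φ, rfl⟩
      refine ⟨φ ∘ₗ LinearMap.inl R _ (Module.Dual R E1), ?_⟩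
      apply LinearMap.ext
      intro x
      have : π (x, 0) = (pQ x, 0) := hπa x 0
      exact congrArg φ this
  have hk' : ∀ l, q' l = 0 ↔ ∃ φ : Module.Dual R (LinearMap.ker s × Module.Dual R E1),
      l = φ ∘ₗ π' := by
    intro l
    obtain ⟨h, hh⟩ := (Module.evalEquiv R E0).surjective
      (l ∘ₗ LinearMap.inl R (Module.Dual R E0) G)
    have hl : ∀ ψ : Module.Dual R E0, l (ψ, 0) = ψ h :=
      fun ψ => (LinearMap.congr_fun hh ψ).symm
    rw [hq'a l h hh]
    constructor
    · intro h2
      have : h ∈ LinearMap.range d := by rw [hd]; exact h2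
      obtain ⟨x, hx⟩ := this
      refine ⟨((l ∘ₗ LinearMap.inr R (Module.Dual R E0) G).coprod (Module.Dual.eval R _ x)) ∘ₗ
        e.toLinearMap ∘ₗ (LinearMap.ker s).subtype.prodMap LinearMap.id, ?_⟩
      apply LinearMap.ext
      rintro ⟨ψ, g⟩
      have h3 : l (ψ, g) = l (ψ, 0) + l (0, g) := by rw [← map_add]; simp
      have h4 : ((LinearMap.ker s).subtype.prodMap LinearMap.id) (π' (ψ, g)) = u (ψ, g) :=
        Prod.ext (hπ'1 _) (hπ'2 _)
      rw [LinearMap.comp_apply, LinearMap.comp_apply, LinearMap.comp_apply, h4, hua,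
        LinearEquiv.coe_coe, LinearEquiv.apply_symm_apply, h3, hl, ← hx, add_comm]
      rfl
    · rintro ⟨φ, rfl⟩
      apply hM
      intro χ
      have h2 : π' (χ ∘ₗ p, 0) = 0 := by
        have h3 : u (χ ∘ₗ p, 0) = 0 := by
          rw [hua, (aux_ker_Qd d p hp hd _).2 ⟨χ, rfl⟩]
          exact map_zero e.symm
        refine Prod.ext (Subtype.ext ?_) ?_
        · rw [hπ'1, h3]; rfl
        · rw [hπ'2, h3]; rfl
      have h5 := hl (χ ∘ₗ p)
      rw [LinearMap.comp_apply, h2, map_zero] at h5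
      exact h5.symm
  obtain ⟨E⟩ := aux_dual_schanuel (B := LinearMap.range dQ.dualMap) (B' := M) π π' hπ hπ' q q' hq hq' hk hk'
  obtain ⟨a, ⟨ea⟩⟩ := aux_free_fin R (Module.Dual R (Module.Dual R E0 × G))
  obtain ⟨b, ⟨eb⟩⟩ := aux_free_fin R (Module.Dual R (H0 × Module.Dual R E1))
  exact ⟨a, b, ⟨((LinearEquiv.refl R (LinearMap.range dQ.dualMap)).prodCongr ea.symm) ≪≫ₗ E ≪≫ₗ
    ((LinearEquiv.refl R M).prodCongr eb)⟩⟩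

/-- Generic form of the first part. -/
theorem aux_part1 {R M L N : Type} [CommRing R] [IsNoetherianRing R] [IsLocalRing R]
    [AddCommGroup M] [Module R M] [AddCommGroup L] [Module R L] [AddCommGroup N] [Module R N]
    [Module.Free R L] [Module.Finite R L] (X : Submodule R L)
    (hCM : IsMCM R R) (hN : IsMCM R N) (n a b : ℕ)
    (π : (Fin n → R) →ₗ[R] N) (hπ : Function.Surjective π) (j : M →ₗ[R] (Fin n → R))
    (hj : Function.Injective j) (hjr : ∀ y, π y = 0 ↔ ∃ x, j x = y)
    (E : (X × (Fin a → R)) ≃ₗ[R] (M × (Fin b → R)))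
    (hX : ∀ f : X →ₗ[R] R, ∃ g : L →ₗ[R] R, ∀ x : X, g x = f x) : IsMCM R (L ⧸ X) := by
  obtain ⟨d, hd⟩ : ∃ d : ℕ, (d : WithBot ℕ∞) = ringKrullDim R := by
    obtain ⟨-, h | ⟨rs, -, -, hl⟩⟩ := hCM
    · exact (not_subsingleton R h).elim
    · exact ⟨_, hl⟩
  refine isMCM_of_extVan d hd ?_
  let i : (X × (Fin a → R)) →ₗ[R] (L × (Fin a → R)) := X.subtype.prodMap LinearMap.id
  let c : (L × (Fin a → R)) →ₗ[R] L ⧸ X := X.mkQ ∘ₗ LinearMap.fst R _ _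
  let j' : (X × (Fin a → R)) →ₗ[R] ((Fin n → R) × (Fin b → R)) :=
    j.prodMap LinearMap.id ∘ₗ E.toLinearMap
  have hext : ∀ f : (X × (Fin a → R)) →ₗ[R] R,
      ∃ g : (L × (Fin a → R)) →ₗ[R] R, ∀ x, g (i x) = f x := by
    intro f
    obtain ⟨g, hg⟩ := hX (f ∘ₗ LinearMap.inl R _ _)
    refine ⟨g.coprod (f ∘ₗ LinearMap.inr R _ _), ?_⟩
    rintro ⟨x, y⟩
    have h3 : f (x, y) = f (x, 0) + f (0, y) := by rw [← map_add]; simp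
    have h4 : g x = f (x, 0) := hg x
    rw [h3, ← h4]
    rfl
  obtain ⟨t, ht⟩ := aux_extend i hext j'
  refine extVan_cosyz d i c ?_ ?_ j' (π ∘ₗ LinearMap.fst R (Fin n → R) (Fin b → R)) ?_ ?_ ?_ t ht
    (extVan_free d hd hCM) (extVan_of_isMCM d hd hN)
  · exact (Submodule.mkQ_surjective _).comp Prod.fst_surjective
  · rintro ⟨x, y⟩
    have : c (x, y) = 0 ↔ x ∈ X := Submodule.Quotient.mk_eq_zero _
    rw [this]
    constructor
    · intro h
      exact ⟨(⟨x, h⟩, y), rfl⟩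
    · rintro ⟨⟨x', y'⟩, h⟩
      have hx : (x' : L) = x := congrArg Prod.fst h
      rw [← hx]
      exact x'.2
  · exact (Function.Injective.prodMap hj Function.injective_id).comp E.injective
  · exact hπ.comp Prod.fst_surjective
  · rintro ⟨x, y⟩
    refine (hjr x).trans ?_
    constructor
    · rintro ⟨m, rfl⟩
      exact ⟨E.symm (m, y), by simp [j']⟩
    · rintro ⟨z, hz⟩
      exact ⟨(E z).1, congrArg Prod.fst hz⟩

/-- Generic form of the second part. -/
theorem aux_part2 {R M L K : Type} [CommRing R] [Nontrivial R]
    [AddCommGroup M] [Module R M] [AddCommGroup L] [Module R L] [AddCommGroup K] [Module R K]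
    [Module.Free R L] [Module.Finite R L] [Module.Free R K] [Module.Finite R K]
    (X : Submodule R L) (a b : ℕ)
    (E : (X × (Fin a → R)) ≃ₗ[R] (M × (Fin b → R))) (s : K →ₗ[R] (L ⧸ X))
    (hs : Function.Surjective s) : ∃ a b : ℕ,
      Nonempty ((M × (Fin a → R)) ≃ₗ[R] (LinearMap.ker s × (Fin b → R))) := by
  obtain ⟨T⟩ := aux_schanuel_ker s X.mkQ hs (Submodule.mkQ_surjective _)
  let T' : (LinearMap.ker s × L) ≃ₗ[R] (X × K) :=
    T ≪≫ₗ (LinearEquiv.ofEq _ _ (Submodule.ker_mkQ _)).prodCongr (LinearEquiv.refl R _)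
  obtain ⟨p, ⟨ep⟩⟩ := aux_free_fin R ((Fin b → R) × K)
  obtain ⟨r, ⟨er⟩⟩ := aux_free_fin R (L × (Fin a → R))
  refine ⟨p, r, ⟨?_⟩⟩
  exact ((LinearEquiv.refl R M).prodCongr ep.symm) ≪≫ₗ
    (LinearEquiv.prodAssoc R M (Fin b → R) K).symm ≪≫ₗ
    (E.symm.prodCongr (LinearEquiv.refl R K)) ≪≫ₗ
    (LinearEquiv.prodAssoc R X (Fin a → R) K) ≪≫ₗ
    ((LinearEquiv.refl R X).prodCongr (LinearEquiv.prodComm R (Fin a → R) K)) ≪≫ₗ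
    (LinearEquiv.prodAssoc R X K (Fin a → R)).symm ≪≫ₗ
    (T'.symm.prodCongr (LinearEquiv.refl R (Fin a → R))) ≪≫ₗ
    (LinearEquiv.prodAssoc R (LinearMap.ker s) L (Fin a → R)) ≪≫ₗ
    ((LinearEquiv.refl R (LinearMap.ker s)).prodCongr er)

end Core


set_option maxHeartbeats 4000000 in
/-- Lemma 2.5. Let `(R, m, k)` be a Cohen-Macaulay local ring with an
isolated singularity and `M ∈ ΩCM(R)`. Then `Ω⁻¹M` is Cohen-Macaulay, and `M ≅ Ω Ω⁻¹ M`
up to free direct summands. -/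
theorem cosyzygy_isMCM_and_syzygy_cosyzygy_eq_up_to_free
    (R : Type) [CommRing R] [IsNoetherianRing R] [IsLocalRing R]
    (hCM : IsMCM R R) (hsing : IsolatedSingularity R)
    (M : Type) [AddCommGroup M] [Module R M] (hM : MemOmegaCM R M)
    (D : CosyzData R M) :
    IsMCM R (CosyzOf R D) ∧
      ∀ S : SyzData R (CosyzOf R D), ∃ a b : ℕ,
        Nonempty ((M × (Fin a → R)) ≃ₗ[R] (Prod (SyzOf R S) (Fin b → R))) := by
  obtain ⟨N, hN, n, π, hπ, -, ⟨ι⟩⟩ := hM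
  let j : M →ₗ[R] (Fin n → R) := (LinearMap.ker π).subtype ∘ₗ ι.toLinearMap
  have hj : Function.Injective j := Subtype.val_injective.comp ι.injective
  have hjr : ∀ y, π y = 0 ↔ ∃ x, j x = y := by
    intro y
    constructor
    · intro h
      exact ⟨ι.symm ⟨y, h⟩, by simp [j]⟩
    · rintro ⟨x, rfl⟩
      exact (ι x).2
  have htl : ∀ x : M, (∀ χ : Module.Dual R M, χ x = 0) → x = 0 := by
    intro x hx
    apply hj
    rw [map_zero]
    funext k
    exact hx (LinearMap.proj k ∘ₗ j)
  have hZ : ∀ x : SyzOf R D.S, (∀ χ : Module.Dual R (SyzOf R D.S), χ x = 0) → x = 0 := by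
    intro x hx
    apply Subtype.ext
    funext k
    exact hx (LinearMap.proj k ∘ₗ (LinearMap.ker D.S.p).subtype)
  obtain ⟨a, b, ⟨E⟩⟩ := aux_stable D.P.d D.P.p D.P.surj D.P.exact D.S.p D.S.surj
    D.Q.d D.Q.p D.Q.surj D.Q.exact htl
  have h1 := aux_part1 (LinearMap.range D.Q.d.dualMap) hCM hN n a b π hπ j hj hjr E
    (aux_ext_Mim D.Q.d D.Q.p D.Q.surj D.Q.exact hZ)
  have h2 : ∀ S : SyzData R (CosyzOf R D), _ := fun S =>
    aux_part2 (LinearMap.range D.Q.d.dualMap) a b E S.p S.surj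
  exact ⟨h1, h2⟩

end Paper
end

section
/- Let R be a Noetherian local ring with maximal ideal m, let R̂ denote the m-adic completion of R, and let M be a finitely generated R-module. Then M has a nonzero free R-module as a direct summand if and only if M ⊗_R R̂ has a nonzero free R̂-module as a direct summand. -/
/-!
Common definitions: Cohen-Macaulay modules, isolated singularities, stable Hom,
syzygies, transposes, Auslander-Reiten sequences, and the Grothendieck-type groups
`G(CM(R))`, `Ex(CM(R))`, `AR(CM(R))` from the paper
"Syzygies of Cohen-Macaulay modules and Grothendieck groups".

Throughout, the maximal ideal of a local ring is realized as the Jacobson radical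
`(⊥ : Ideal R).jacobson` (for a local ring these coincide), which lets the definitions
make sense without a `IsLocalRing` instance argument.
-/

namespace Paper

/-- A functional taking the value one splits off a free summand, and conversely. -/
theorem hasFreeSummand_iff_exists (A : Type) [CommRing A] (N : Type) [AddCommGroup N]
    [Module A N] : HasFreeSummand A N ↔ ∃ (f : N →ₗ[A] A) (x : N), f x = 1 := by
  constructor
  · rintro ⟨P, ⟨e⟩⟩
    exact ⟨LinearMap.snd A P A ∘ₗ e.toLinearMap, e.symm (0, 1), by simp⟩
  · rintro ⟨f, x, hx⟩
    refine ⟨ModuleCat.of A (LinearMap.ker f), ⟨LinearEquiv.ofLinear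
      (LinearMap.prod (LinearMap.codRestrict (LinearMap.ker f)
        (LinearMap.id - LinearMap.toSpanSingleton A N x ∘ₗ f) (by intro y; simp [hx])) f)
      (LinearMap.coprod (LinearMap.ker f).subtype (LinearMap.toSpanSingleton A N x)) ?_ ?_⟩⟩
    · apply LinearMap.ext
      rintro ⟨⟨k, hk⟩, a⟩
      have hk' : f k = 0 := hk
      refine Prod.ext (Subtype.ext ?_) ?_ <;> simp [hx, hk']
    · apply LinearMap.ext
      intro y
      simp

open scoped TensorProduct in
open IsLocalRing in
/-- Lemma 2.6(1). Let `R` be a Noetherian local ring with `m`-adic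
completion `R̂`, and `M` a finitely generated `R`-module. Then `M` has a nonzero free
direct summand if and only if `M ⊗_R R̂` has a nonzero free direct summand over `R̂`. -/
theorem hasFreeSummand_iff_completion
    (R : Type) [CommRing R] [IsNoetherianRing R] [IsLocalRing R]
    (M : Type) [AddCommGroup M] [Module R M] (hM : Module.Finite R M) :
    HasFreeSummand R M ↔
      HasFreeSummand (AdicCompletion (maximalIdeal R) R)
        (TensorProduct R (AdicCompletion (maximalIdeal R) R) M) := by
  rw [hasFreeSummand_iff_exists, hasFreeSummand_iff_exists]
  constructor
  · rintro ⟨f, x, hx⟩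
    exact ⟨LinearMap.liftBaseChange _ (Algebra.linearMap R _ ∘ₗ f), 1 ⊗ₜ[R] x, by simp [hx]⟩
  · rintro ⟨f, z, hz⟩
    by_contra hcon
    have hm : ∀ (g : M →ₗ[R] R) (x : M), g x ∈ maximalIdeal R := by
      intro g x
      by_contra hu
      have hu : IsUnit (g x) := by simpa using hu
      obtain ⟨u, hu⟩ := hu
      exact hcon ⟨g, (↑u⁻¹ : R) • x, by simp [← hu]⟩
    have : Module.FinitePresentation R M := Module.finitePresentation_of_finite R M
    have key : ∀ x : M, f (1 ⊗ₜ[R] x) ∈ maximalIdeal (AdicCompletion (maximalIdeal R) R) := by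
      intro x
      obtain ⟨k, h1, h2, h12⟩ := Module.Flat.exists_factorization_of_isFinitelyPresented
        (f.restrictScalars R ∘ₗ TensorProduct.mk R (AdicCompletion (maximalIdeal R) R) M 1)
      have h3 : f (1 ⊗ₜ[R] x) = h2 (h1 x) := congrArg (fun g => g x) h12
      rw [h3, ← Finsupp.univ_sum_single (h1 x), map_sum]
      refine Ideal.sum_mem _ fun i _ => ?_
      have h4 : h1 x i ∈ maximalIdeal R := hm (Finsupp.lapply i ∘ₗ h1) x
      have h5 : Finsupp.single i (h1 x i) = (h1 x i) • Finsupp.single i (1 : R) := by simp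
      rw [h5, map_smul, Algebra.smul_def]
      refine Ideal.mul_mem_right _ _ ?_
      rw [mem_maximalIdeal, mem_nonunits_iff] at h4 ⊢
      exact fun h => h4 (isUnit_of_map_unit _ _ h)
    have key2 : f z ∈ maximalIdeal (AdicCompletion (maximalIdeal R) R) := by
      clear hz
      induction z using TensorProduct.induction_on with
      | zero => simp
      | tmul a x =>
        have : a ⊗ₜ[R] x = a • ((1 : AdicCompletion (maximalIdeal R) R) ⊗ₜ[R] x) := by
          simp [TensorProduct.smul_tmul']
        rw [this, map_smul, smul_eq_mul]
        exact Ideal.mul_mem_left _ _ (key x)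
      | add a b ha hb => rw [map_add]; exact Ideal.add_mem _ ha hb
    rw [hz] at key2
    exact (Ideal.ne_top_iff_one _).1 (maximalIdeal.isMaximal _).ne_top key2

end Paper
end

section
/- Let R be a Noetherian local ring and let M be a finitely generated R-module. Then there exists a decomposition M ≅ M' ⊕ R^a where M' is a finitely generated R-module with no nonzero free direct summand and a ≥ 0, and this decomposition is unique up to isomorphism: if also M ≅ M'' ⊕ R^b with M'' having no nonzero free direct summand, then M' ≅ M'' and a = b. -/
/-!
Common definitions: Cohen-Macaulay modules, isolated singularities, stable Hom,
syzygies, transposes, Auslander-Reiten sequences, and the Grothendieck-type groups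
`G(CM(R))`, `Ex(CM(R))`, `AR(CM(R))` from the paper
"Syzygies of Cohen-Macaulay modules and Grothendieck groups".

Throughout, the maximal ideal of a local ring is realized as the Jacobson radical
`(⊥ : Ideal R).jacobson` (for a local ring these coincide), which lets the definitions
make sense without a `IsLocalRing` instance argument.
-/

namespace Paper

section Helpers

/-- `M × R^(n+1) ≅ (M × R^n) × R`. -/
noncomputable def succEquiv (R : Type) [CommRing R] (M : Type) [AddCommGroup M] [Module R M]
    (n : ℕ) : (M × (Fin (n + 1) → R)) ≃ₗ[R] ((M × (Fin n → R)) × R) where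
  toFun p := ((p.1, fun i => p.2 i.succ), p.2 0)
  invFun q := (q.1.1, Fin.cons q.2 q.1.2)
  map_add' _ _ := rfl
  map_smul' _ _ := rfl
  left_inv p := by
    refine Prod.ext rfl (funext fun i => ?_)
    refine Fin.cases ?_ (fun j => ?_) i <;> simp
  right_inv q := by simp

/-- `M × R^0 ≅ M`. -/
noncomputable def zeroEquiv (R : Type) [CommRing R] (M : Type) [AddCommGroup M] [Module R M] :
    (M × (Fin 0 → R)) ≃ₗ[R] M where
  toFun p := p.1
  invFun q := (q, 0)
  map_add' _ _ := rfl
  map_smul' _ _ := rfl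
  left_inv p := Prod.ext rfl (Subsingleton.elim _ _)
  right_inv q := rfl

theorem ker_equiv {R : Type} [CommRing R] {X : Type} [AddCommGroup X] [Module R X]
    (f g : X →ₗ[R] R) (y : X) (hf : IsUnit (f y)) (hg : IsUnit (g y)) :
    Nonempty (LinearMap.ker f ≃ₗ[R] LinearMap.ker g) := by
  obtain ⟨c, hc⟩ := hf.exists_right_inv
  obtain ⟨d, hd⟩ := hg.exists_right_inv
  let F : X →ₗ[R] X := LinearMap.id - ((d • g).smulRight y)
  let G : X →ₗ[R] X := LinearMap.id - ((c • f).smulRight y)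
  have hF : ∀ x, F x = x - (d * g x) • y := fun x => by simp [F]
  have hG : ∀ x, G x = x - (c * f x) • y := fun x => by simp [G]
  have kF : ∀ x ∈ LinearMap.ker f, F x ∈ LinearMap.ker g := fun x _ => by
    rw [LinearMap.mem_ker, hF, map_sub, map_smul, smul_eq_mul]
    linear_combination (-g x) * hd
  have kG : ∀ x ∈ LinearMap.ker g, G x ∈ LinearMap.ker f := fun x _ => by
    rw [LinearMap.mem_ker, hG, map_sub, map_smul, smul_eq_mul]
    linear_combination (-f x) * hc
  refine ⟨LinearEquiv.ofLinearMap (F.restrict kF) (G.restrict kG) ?_ ?_⟩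
  · ext ⟨x, hx⟩
    rw [LinearMap.mem_ker] at hx
    change F (G x) = x
    rw [hF, hG, map_sub, map_smul, smul_eq_mul, hx, sub_sub, ← add_smul]
    have : c * f x + d * (0 - c * f x * g y) = 0 := by
      linear_combination (-c * f x) * hd
    rw [this, zero_smul, sub_zero]
  · ext ⟨x, hx⟩
    rw [LinearMap.mem_ker] at hx
    change G (F x) = x
    rw [hG, hF, map_sub, map_smul, smul_eq_mul, hx, sub_sub, ← add_smul]
    have : d * g x + c * (0 - d * g x * f y) = 0 := by
      linear_combination (-d * g x) * hc
    rw [this, zero_smul, sub_zero]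

theorem ker_equiv_local {R : Type} [CommRing R] [IsLocalRing R] {X : Type} [AddCommGroup X]
    [Module R X] (f g : X →ₗ[R] R) (x y : X) (hf : f x = 1) (hg : g y = 1) :
    Nonempty (LinearMap.ker f ≃ₗ[R] LinearMap.ker g) := by
  by_cases h1 : IsUnit (f y)
  · exact ker_equiv f g y h1 (by simp [hg])
  by_cases h2 : IsUnit (g x)
  · exact ker_equiv f g x (by simp [hf]) h2
  have key : ∀ a : R, ¬ IsUnit a → IsUnit (1 + a) := fun a ha => by
    have h : IsUnit ((1 + a) + (-a)) := by simp
    rcases IsLocalRing.isUnit_or_isUnit_of_isUnit_add h with h | h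
    · exact h
    · exact absurd (by simpa using h) ha
  obtain ⟨e1⟩ := ker_equiv f (f + g) x (by simp [hf])
    (by rw [LinearMap.add_apply, hf]; exact key _ h2)
  obtain ⟨e2⟩ := ker_equiv (f + g) g y
    (by rw [LinearMap.add_apply, hg, add_comm]; exact key _ h1) (by simp [hg])
  exact ⟨e1.trans e2⟩

/-- The first factor as the kernel of the second coordinate. -/
noncomputable def facEquiv {R : Type} [CommRing R] {X P : Type} [AddCommGroup X] [Module R X]
    [AddCommGroup P] [Module R P] (e : X ≃ₗ[R] (P × R)) :
    LinearMap.ker ((LinearMap.snd R P R) ∘ₗ e.toLinearMap) ≃ₗ[R] P where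
  toFun x := (e x.1).1
  invFun p := ⟨e.symm (p, 0), by simp⟩
  map_add' _ _ := by simp
  map_smul' _ _ := by simp
  left_inv x := by
    obtain ⟨x, hx⟩ := x
    apply Subtype.ext
    have hx' : (e x).2 = 0 := hx
    change e.symm ((e x).1, 0) = x
    rw [← hx', Prod.mk.eta, e.symm_apply_apply]
  right_inv p := by simp

theorem cancel_one {R : Type} [CommRing R] [IsLocalRing R] {P Q : Type} [AddCommGroup P]
    [Module R P] [AddCommGroup Q] [Module R Q] (e : (P × R) ≃ₗ[R] (Q × R)) :
    Nonempty (P ≃ₗ[R] Q) := by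
  obtain ⟨k⟩ := ker_equiv_local
    ((LinearMap.snd R P R) ∘ₗ (LinearEquiv.refl R (P × R)).toLinearMap)
    ((LinearMap.snd R Q R) ∘ₗ e.toLinearMap) (0, 1) (e.symm (0, 1)) (by simp) (by simp)
  exact ⟨(facEquiv _).symm.trans (k.trans (facEquiv e))⟩

theorem hasFree_of_equiv {R : Type} [CommRing R] {P Q : Type} [AddCommGroup P]
    [Module R P] [AddCommGroup Q] [Module R Q] (n : ℕ) (e : P ≃ₗ[R] (Q × (Fin (n + 1) → R))) :
    HasFreeSummand R P :=
  ⟨ModuleCat.of R (Q × (Fin n → R)), ⟨e.trans (succEquiv R Q n)⟩⟩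

theorem unique_aux {R : Type} [CommRing R] [IsLocalRing R] {P Q : Type} [AddCommGroup P]
    [Module R P] [AddCommGroup Q] [Module R Q] (hP : ¬ HasFreeSummand R P)
    (hQ : ¬ HasFreeSummand R Q) (a : ℕ) : ∀ (b : ℕ)
    (_ : (P × (Fin a → R)) ≃ₗ[R] (Q × (Fin b → R))), Nonempty (P ≃ₗ[R] Q) ∧ a = b := by
  induction a with
  | zero =>
    intro b e
    cases b with
    | zero => exact ⟨⟨(zeroEquiv R P).symm.trans (e.trans (zeroEquiv R Q))⟩, rfl⟩
    | succ b => exact absurd (hasFree_of_equiv b ((zeroEquiv R P).symm.trans e)) hP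
  | succ a ih =>
    intro b e
    cases b with
    | zero => exact absurd (hasFree_of_equiv a ((zeroEquiv R Q).symm.trans e.symm)) hQ
    | succ b =>
      obtain ⟨k⟩ := cancel_one ((succEquiv R P a).symm.trans (e.trans (succEquiv R Q b)))
      obtain ⟨h1, h2⟩ := ih b k
      exact ⟨h1, by rw [h2]⟩

theorem exists_aux (R : Type) [CommRing R] [Nontrivial R] (M : Type) [AddCommGroup M]
    [Module R M] (hM : Module.Finite R M) :
    ∃ (P : ModuleCat.{0} R) (a : ℕ), ¬ HasFreeSummand R P ∧
      Nonempty (M ≃ₗ[R] (Prod (P : Type) (Fin a → R))) := by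
  classical
  obtain ⟨n, s, hs⟩ := Module.Finite.exists_fin' R M
  let T : ℕ → Prop := fun a => ∃ P : ModuleCat.{0} R,
    Nonempty (M ≃ₗ[R] (Prod (P : Type) (Fin a → R)))
  have bd : ∀ a, T a → a ≤ n := by
    rintro a ⟨P, ⟨e⟩⟩
    refine le_of_fin_surjective R (LinearMap.snd R P (Fin a → R) ∘ₗ e.toLinearMap ∘ₗ s) ?_
    exact Prod.snd_surjective.comp (e.surjective.comp hs)
  have h0 : T 0 := ⟨ModuleCat.of R M, ⟨(zeroEquiv R M).symm⟩⟩
  obtain ⟨P, ⟨e⟩⟩ : T (Nat.findGreatest T n) := Nat.findGreatest_spec (Nat.zero_le n) h0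
  refine ⟨P, _, ?_, ⟨e⟩⟩
  rintro ⟨Q, ⟨k⟩⟩
  have h1 : T (Nat.findGreatest T n + 1) := by
    generalize Nat.findGreatest T n = a at e
    have k1 : (P × (Fin a → R)) ≃ₗ[R] ((Q × R) × (Fin a → R)) :=
      LinearEquiv.prodCongr k (LinearEquiv.refl R _)
    have k2 : ((Q × R) × (Fin a → R)) ≃ₗ[R] (Q × (R × (Fin a → R))) :=
      LinearEquiv.prodAssoc R Q R _
    have k3 : (Q × (R × (Fin a → R))) ≃ₗ[R] (Q × ((Fin a → R) × R)) :=
      LinearEquiv.prodCongr (LinearEquiv.refl R Q) (LinearEquiv.prodComm R _ _)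
    have k4 : ((Q × (Fin a → R)) × R) ≃ₗ[R] (Q × ((Fin a → R) × R)) :=
      LinearEquiv.prodAssoc R Q _ R
    exact ⟨Q, ⟨e.trans (k1.trans (k2.trans (k3.trans (k4.symm.trans (succEquiv R Q a).symm))))⟩⟩
  have := Nat.le_findGreatest (bd _ h1) h1
  omega

end Helpers

/-- Lemma 2.6(2). Every finitely generated module `M` over a Noetherian
local ring decomposes as `M ≅ M' ⊕ R^a` with `M'` having no nonzero free direct summand,
uniquely up to isomorphism. -/
theorem exists_unique_nonfree_part
    (R : Type) [CommRing R] [IsNoetherianRing R] [IsLocalRing R]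
    (M : Type) [AddCommGroup M] [Module R M] (hM : Module.Finite R M) :
    ∃ (M' : ModuleCat.{0} R) (a : ℕ), ¬ HasFreeSummand R (M' : Type) ∧
      Nonempty (M ≃ₗ[R] (Prod (M' : Type) (Fin a → R))) ∧
      ∀ (M'' : ModuleCat.{0} R) (b : ℕ), ¬ HasFreeSummand R (M'' : Type) →
        Nonempty (M ≃ₗ[R] (Prod (M'' : Type) (Fin b → R))) →
        (Nonempty ((M' : Type) ≃ₗ[R] (M'' : Type)) ∧ a = b) := by
  obtain ⟨P, a, hP, ⟨e⟩⟩ := exists_aux R M hM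
  exact ⟨P, a, hP, ⟨e⟩, fun Q b hQ ⟨k⟩ => unique_aux hP hQ a b (e.symm.trans k)⟩

end Paper
end

section
/- Let (R, m, k) be a Cohen–Macaulay local ring with an isolated singularity and let M, N be Cohen–Macaulay R-modules. Then the R-module stHom_R(M, N) has finite length. -/
/-!
Common definitions: Cohen-Macaulay modules, isolated singularities, stable Hom,
syzygies, transposes, Auslander-Reiten sequences, and the Grothendieck-type groups
`G(CM(R))`, `Ex(CM(R))`, `AR(CM(R))` from the paper
"Syzygies of Cohen-Macaulay modules and Grothendieck groups".

Throughout, the maximal ideal of a local ring is realized as the Jacobson radical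
`(⊥ : Ideal R).jacobson` (for a local ring these coincide), which lets the definitions
make sense without a `IsLocalRing` instance argument.
-/

namespace Paper

open RingTheory.Sequence IsLocalRing
open scoped Pointwise

def HasDepth (R : Type) [CommRing R] [IsLocalRing R] (M : Type) [AddCommGroup M] [Module R M]
    (d : ℕ) : Prop :=
  ∃ rs : List R, rs.length = d ∧ (∀ x ∈ rs, x ∈ maximalIdeal R) ∧ IsWeaklyRegular M rs

lemma isWeaklyRegular_of_subsingleton {R M : Type} [CommRing R] [AddCommGroup M] [Module R M]
    [Subsingleton M] (rs : List R) : IsWeaklyRegular M rs := by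
  rw [isWeaklyRegular_iff]
  intro i hi
  exact fun a b _ => Subsingleton.elim a b

lemma hasDepth_of_subsingleton {R M : Type} [CommRing R] [IsLocalRing R] [AddCommGroup M]
    [Module R M] [Subsingleton M] (d : ℕ) : HasDepth R M d :=
  ⟨List.replicate d 0, by simp, by
    intro x hx
    rw [List.eq_of_mem_replicate hx]; exact zero_mem _, isWeaklyRegular_of_subsingleton _⟩

open CategoryTheory Abelian Limits in
lemma HasDepth.quot {R M : Type} [CommRing R] [IsNoetherianRing R] [IsLocalRing R]
    [AddCommGroup M] [Module R M] [Module.Finite R M] {d : ℕ} (h : HasDepth R M (d + 1))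
    {x : R} (hx : x ∈ maximalIdeal R) (hreg : IsSMulRegular M x) :
    HasDepth R (QuotSMulTop x M) d := by
  cases subsingleton_or_nontrivial M
  · have : Subsingleton (QuotSMulTop x M) := by unfold QuotSMulTop; infer_instance
    exact hasDepth_of_subsingleton d
  · obtain ⟨rs, hlen, hmem, hrs⟩ := h
    have hrs' := IsRegular.of_isWeaklyRegular_of_mem_maximalIdeal M hmem hrs
    have := nontrivial_quotSMulTop_of_mem_maximalIdeal M hx
    have lt1 : ∀ (L : Type) [AddCommGroup L] [Module R L] [Module.Finite R L] [Nontrivial L],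
        maximalIdeal R • (⊤ : Submodule R L) < ⊤ := fun L _ _ _ _ =>
      (Submodule.top_ne_ideal_smul_of_le_jacobson_annihilator
        (maximalIdeal_le_jacobson _)).symm.lt_top
    have supp : Module.support R (R ⧸ maximalIdeal R) =
        PrimeSpectrum.zeroLocus (maximalIdeal R) := by
      rw [Module.support_eq_zeroLocus, Ideal.annihilator_quotient]
    have hext := ModuleCat.subsingleton_ext_of_exists_isRegular (maximalIdeal R)
      (ModuleCat.of R (R ⧸ maximalIdeal R)) supp.subset (ModuleCat.of R M) (lt1 M) rs hmem hrs'
    rw [hlen] at hext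
    have hext' : ∀ i < d, Subsingleton (Ext (ModuleCat.of R (R ⧸ maximalIdeal R))
        (ModuleCat.of R (QuotSMulTop x M)) i) := by
      intro i hi
      have zero1 := AddCommGrpCat.isZero_of_iff_subsingleton.mpr (hext i (by omega))
      have zero2 := AddCommGrpCat.isZero_of_iff_subsingleton.mpr (hext (i + 1) (by omega))
      have hreg' : IsSMulRegular (ModuleCat.of R M) x := hreg
      exact AddCommGrpCat.subsingleton_of_isZero <| ShortComplex.Exact.isZero_of_both_zeros
        ((Ext.covariant_sequence_exact₃' (ModuleCat.of R (R ⧸ maximalIdeal R))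
          hreg'.smulShortComplex_shortExact) i (i + 1) rfl)
        (zero1.eq_zero_of_src _) (zero2.eq_zero_of_tgt _)
    obtain ⟨rs', a, b, c⟩ := ModuleCat.exists_isRegular_of_exists_subsingleton_ext (maximalIdeal R)
      d (ModuleCat.of R (QuotSMulTop x M)) (lt1 _) (ModuleCat.of R (R ⧸ maximalIdeal R)) supp hext'
    exact ⟨rs', a, b, c.toIsWeaklyRegular⟩

lemma HasDepth.le_coheight {R : Type} [CommRing R] [IsNoetherianRing R] [IsLocalRing R]
    (d : ℕ) : ∀ {M : Type} [AddCommGroup M] [Module R M] [Module.Finite R M]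
    (_ : HasDepth R M d) (q : PrimeSpectrum R) (_ : IsAssociatedPrime q.asIdeal M),
    (d : ℕ∞) ≤ Order.coheight q := by
  induction d with
  | zero => intros; simp
  | succ d ih =>
    intro M _ _ _ h q hq
    obtain ⟨rs, hlen, hmem, hrs⟩ := h
    match rs, hlen with
    | x :: rs, hlen =>
      rw [isWeaklyRegular_cons_iff] at hrs
      obtain ⟨hx, hrs⟩ := hrs
      have hdep : HasDepth R (QuotSMulTop x M) d :=
        ⟨rs, by simpa using hlen, fun y hy => hmem y (by simp [hy]), hrs⟩
      obtain ⟨hp, m, hm⟩ := isAssociatedPrime_iff.mp hq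
      have hm0 : m ≠ 0 := by
        rintro rfl
        apply hp.ne_top
        rw [hm]; ext; simp [Submodule.mem_colon_singleton]
      let N : Submodule R M :=
        { carrier := {z | ∀ r ∈ q.asIdeal, r • z = 0}
          add_mem' := fun ha hb r hr => by rw [smul_add, ha r hr, hb r hr, add_zero]
          zero_mem' := fun r _ => smul_zero r
          smul_mem' := fun c z hz r hr => by rw [smul_comm, hz r hr, smul_zero] }
      have hmN : m ∈ N := fun r hr => by
        rw [hm, Submodule.mem_colon_singleton] at hr
        simpa using hr
      have hex : ∃ z ∈ N, z ∉ (x • ⊤ : Submodule R M) := by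
        by_contra hcon
        push Not at hcon
        have hle : N ≤ maximalIdeal R • N := by
          intro z hz
          obtain ⟨w, -, rfl⟩ := hcon z hz
          refine Submodule.smul_mem_smul (hmem x (by simp)) ?_
          intro r hr
          apply hx
          have := hz r hr
          simp only [smul_zero]
          rw [smul_comm]
          exact this
        have := Submodule.eq_bot_of_le_smul_of_le_jacobson_bot (maximalIdeal R) N
          (IsNoetherian.noetherian N) hle (by rw [jacobson_eq_maximalIdeal ⊥ bot_ne_top])
        exact hm0 (by simpa [this] using hmN)
      obtain ⟨z, hzN, hz⟩ := hex
      have hz' : (Submodule.Quotient.mk z : QuotSMulTop x M) ≠ 0 := by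
        rwa [Ne, Submodule.Quotient.mk_eq_zero]
      obtain ⟨P, hP, hle⟩ := exists_le_isAssociatedPrime_of_isNoetherianRing R _ hz'
      have hqP : q.asIdeal ≤ P := fun r hr => hle (by
        rw [Submodule.mem_colon_singleton, ← Submodule.Quotient.mk_smul, hzN r hr]; simp)
      have hxP : x ∈ P := hle (by
        rw [Submodule.mem_colon_singleton, ← Submodule.Quotient.mk_smul, Submodule.mem_bot,
          Submodule.Quotient.mk_eq_zero]
        exact Submodule.smul_mem_pointwise_smul _ _ _ trivial)
      have hxq : x ∉ q.asIdeal := fun hxq => hm0 (hx (by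
        simpa using hmN x hxq))
      let P' : PrimeSpectrum R := ⟨P, hP.isPrime⟩
      have hlt : q < P' := by
        refine lt_of_le_of_ne hqP ?_
        rintro rfl
        exact hxq hxP
      have := ih hdep P' hP
      calc ((d + 1 : ℕ) : ℕ∞) = d + 1 := by push_cast; rfl
        _ ≤ Order.coheight P' + 1 := by gcongr
        _ ≤ _ := Order.coheight_add_one_le hlt

lemma exists_regular_of_not_le {R M : Type} [CommRing R] [IsNoetherianRing R]
    [AddCommGroup M] [Module R M] [Module.Finite R M] (p : Ideal R)
    (h : ∀ q, IsAssociatedPrime q M → ¬ p ≤ q) : ∃ x ∈ p, IsSMulRegular M x := by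
  cases subsingleton_or_nontrivial M
  · exact ⟨0, zero_mem _, IsSMulRegular.zero⟩
  by_contra! hc
  have hexist : ∃ q ∈ associatedPrimes R M, p ≤ q := by
    rcases associatedPrimes.nonempty R M with ⟨Ia, hIa⟩
    apply (Ideal.subset_union_prime_finite (associatedPrimes.finite R M) Ia Ia _).mp
    · rw [biUnion_associatedPrimes_eq_compl_regular R M]
      exact fun r hr ↦ hc r hr
    · exact fun I hin _ _ ↦ IsAssociatedPrime.isPrime hin
  obtain ⟨q, hq, hle⟩ := hexist
  exact h q hq hle

lemma HasDepth.exists_seq {R : Type} [CommRing R] [IsNoetherianRing R] [IsLocalRing R]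
    (p : PrimeSpectrum R) (n : ℕ) : ∀ {M : Type} [AddCommGroup M] [Module R M] [Module.Finite R M]
    (d : ℕ) (_ : HasDepth R M d) (_ : (n : ℕ∞) + Order.coheight p ≤ d),
    ∃ rs : List R, rs.length = n ∧ (∀ x ∈ rs, x ∈ p.asIdeal) ∧ IsWeaklyRegular M rs := by
  induction n with
  | zero => intros; exact ⟨[], by simp⟩
  | succ n ih =>
    intro M _ _ _ d h hd
    obtain ⟨c, hc⟩ : ∃ c : ℕ, Order.coheight p = c := by
      refine ENat.ne_top_iff_exists.mp ?_ |>.imp fun _ h => h.symm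
      rintro hc
      rw [hc] at hd
      simp at hd
    rw [hc] at hd
    norm_cast at hd
    obtain ⟨d, rfl⟩ : ∃ e, d = e + 1 := ⟨d - 1, by omega⟩
    obtain ⟨x, hxp, hx⟩ := exists_regular_of_not_le (M := M) p.asIdeal (by
      intro q hq hle
      have h1 := h.le_coheight _ ⟨q, hq.isPrime⟩ hq
      have h2 : Order.coheight (⟨q, hq.isPrime⟩ : PrimeSpectrum R) ≤ Order.coheight p :=
        Order.coheight_anti hle
      rw [hc] at h2
      have := h1.trans h2
      norm_cast at this
      omega)
    have hxm : x ∈ maximalIdeal R := le_maximalIdeal p.2.ne_top hxp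
    obtain ⟨rs, hlen, hmem, hreg⟩ := ih d (h.quot hxm hx) (by rw [hc]; norm_cast; omega)
    exact ⟨x :: rs, by simp [hlen], by simpa [hxp] using hmem, hreg.cons hx⟩

lemma map_mk_max {A : Type} [CommRing A] [IsLocalRing A] (I : Ideal A) [IsLocalRing (A ⧸ I)] :
    (maximalIdeal A).map (Ideal.Quotient.mk I) = maximalIdeal (A ⧸ I) := by
  have : IsLocalHom (Ideal.Quotient.mk I) := IsLocalHom.of_surjective _ Ideal.Quotient.mk_surjective
  rw [← maximalIdeal_comap (Ideal.Quotient.mk I),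
    Ideal.map_comap_of_surjective _ Ideal.Quotient.mk_surjective]

lemma coheight_le_of_span {A : Type} [CommRing A] [IsNoetherianRing A] [IsLocalRing A]
    (x : A) (l : List A) (hl : Ideal.ofList (x :: l) = maximalIdeal A) (q : PrimeSpectrum A)
    (hx : x ∈ q.asIdeal) : Order.coheight q ≤ l.length := by
  have : Nontrivial (A ⧸ q.asIdeal) := Ideal.Quotient.nontrivial_iff.mpr q.2.ne_top
  have : IsLocalRing (A ⧸ q.asIdeal) :=
    IsLocalRing.of_surjective' _ Ideal.Quotient.mk_surjective
  have h1 : ((Order.coheight q : ℕ∞) : WithBot ℕ∞) = ringKrullDim (A ⧸ q.asIdeal) := by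
    rw [ringKrullDim_quotient, Order.coheight_eq_krullDim_Ici]
    rfl
  have hmax : maximalIdeal (A ⧸ q.asIdeal) =
      Ideal.ofList (l.map (Ideal.Quotient.mk q.asIdeal)) := by
    have h2 : (maximalIdeal A).map (Ideal.Quotient.mk q.asIdeal) =
        maximalIdeal (A ⧸ q.asIdeal) := map_mk_max _
    rw [← h2, ← hl, Ideal.map_ofList, List.map_cons, Ideal.ofList_cons,
      Ideal.Quotient.eq_zero_iff_mem.mpr hx]
    simp
  have h3 : ringKrullDim (A ⧸ q.asIdeal) ≤ l.length := by
    refine (ringKrullDim_le_spanFinrank_maximalIdeal _).trans ?_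
    rw [hmax]
    classical
    have h4 := Submodule.spanFinrank_span_le_ncard_of_finite (R := A ⧸ q.asIdeal)
      (s := {r | r ∈ l.map (Ideal.Quotient.mk q.asIdeal)}) (List.finite_toSet _)
    have h5 : {r | r ∈ l.map (Ideal.Quotient.mk q.asIdeal)}.ncard ≤ l.length := by
      rw [← List.coe_toFinset, Set.ncard_coe_finset]
      exact (List.toFinset_card_le _).trans (by simp)
    exact_mod_cast h4.trans h5
  rw [← h1] at h3
  exact_mod_cast h3

lemma isSMulRegular_of_span {A M : Type} [CommRing A] [IsNoetherianRing A] [IsLocalRing A]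
    [AddCommGroup M] [Module A M] [Module.Finite A M]
    (x : A) (l : List A) (hl : Ideal.ofList (x :: l) = maximalIdeal A)
    (h : HasDepth A M (l.length + 1)) : IsSMulRegular M x := by
  by_contra hc
  have hc' : x ∈ {r : A | IsSMulRegular M r}ᶜ := hc
  rw [← biUnion_associatedPrimes_eq_compl_regular A M] at hc'
  simp only [Set.mem_iUnion] at hc'
  obtain ⟨q, hq, hxq⟩ := hc'
  have h1 := h.le_coheight _ ⟨q, hq.1⟩ hq
  have h2 := coheight_le_of_span x l hl ⟨q, hq.1⟩ hxq
  have := h1.trans h2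
  norm_cast at this
  omega

lemma HasDepth.descend {A M : Type} [CommRing A] [IsLocalRing A] {I : Ideal A}
    [IsLocalRing (A ⧸ I)]
    [AddCommGroup M] [Module A M] [Module (A ⧸ I) M] [IsScalarTower A (A ⧸ I) M] {d : ℕ}
    (h : HasDepth A M d) : HasDepth (A ⧸ I) M d := by
  obtain ⟨rs, hlen, hmem, hreg⟩ := h
  refine ⟨rs.map (algebraMap A (A ⧸ I)), by simpa using hlen, ?_,
    (isWeaklyRegular_map_algebraMap_iff (A ⧸ I) M rs).mpr hreg⟩
  simp only [List.mem_map]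
  rintro _ ⟨y, hy, rfl⟩
  have : IsLocalHom (algebraMap A (A ⧸ I)) := IsLocalHom.of_surjective _ Ideal.Quotient.mk_surjective
  have := hmem y hy
  rw [mem_maximalIdeal, mem_nonunits_iff] at this ⊢
  simpa using this

lemma free_of_depth : ∀ (l : List ℕ) {A M : Type} [CommRing A] [IsNoetherianRing A] [IsLocalRing A]
    [AddCommGroup M] [Module A M] [Module.Finite A M] (l' : List A) (_ : l'.length = l.length)
    (_ : Ideal.ofList l' = maximalIdeal A)
    (_ : HasDepth A A l'.length) (_ : HasDepth A M l'.length), Module.Free A M := by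
  intro n
  induction n with
  | nil =>
    intro A M _ _ _ _ _ _ l' hlen hl hA hM
    obtain rfl : l' = [] := by simpa using hlen
    have : IsField A := IsLocalRing.isField_iff_maximalIdeal_eq.mpr (by simpa using hl.symm)
    letI := this.toField
    exact Module.Free.of_divisionRing A M
  | cons a n ih =>
    intro A M _ _ _ _ _ _ l' hlen hl hA hM
    match l', hlen with
    | x :: l, hlen =>
    have hxm : x ∈ maximalIdeal A := by rw [← hl]; simp [Ideal.ofList_cons, Ideal.mem_sup_left, Ideal.mem_span_singleton_self]
    have hxA := isSMulRegular_of_span x l hl hA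
    have hxM := isSMulRegular_of_span x l hl hM
    have hne : Ideal.span {x} ≠ ⊤ := by
      rw [Ne, Ideal.span_singleton_eq_top]; exact hxm
    have : Nontrivial (A ⧸ Ideal.span {x}) := Ideal.Quotient.nontrivial_iff.mpr hne
    have : IsLocalRing (A ⧸ Ideal.span {x}) :=
      IsLocalRing.of_surjective' _ Ideal.Quotient.mk_surjective
    have hA' : HasDepth A (A ⧸ Ideal.span {x}) l.length := by
      have h := HasDepth.quot hA hxm hxA
      obtain ⟨rs, h1, h2, h3⟩ := h
      refine ⟨rs, h1, h2, ?_⟩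
      have e : QuotSMulTop x A ≃ₗ[A] (A ⧸ Ideal.span {x}) :=
        Submodule.quotEquivOfEq _ _ (by simp [← Submodule.ideal_span_singleton_smul])
      exact (e.isWeaklyRegular_congr rs).mp h3
    have hM' := HasDepth.quot hM hxm hxM
    have : Module.Finite (A ⧸ Ideal.span {x}) (QuotSMulTop x M) :=
      Module.Finite.of_restrictScalars_finite A (A ⧸ Ideal.span {x}) (QuotSMulTop x M)
    have hmem : x ∈ (⊥ : Ideal A).jacobson := by
      rwa [jacobson_eq_maximalIdeal ⊥ bot_ne_top]
    have : Module.FinitePresentation A M := Module.finitePresentation_of_finite A M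
    rw [← Module.free_quotSMulTop_iff_free A M hmem hxM]
    refine ih (l.map (Ideal.Quotient.mk (Ideal.span {x}))) (by simpa using hlen) ?_ ?_ ?_
    · have h2 : (maximalIdeal A).map (Ideal.Quotient.mk (Ideal.span {x})) =
        maximalIdeal (A ⧸ Ideal.span {x}) := map_mk_max _
      rw [← h2, ← hl, Ideal.map_ofList, List.map_cons, Ideal.ofList_cons,
        Ideal.Quotient.eq_zero_iff_mem.mpr (Ideal.mem_span_singleton_self x)]
      simp
    · simpa using hA'.descend
    · simpa using hM'.descend

lemma mcm_hasDepth {R M : Type} [CommRing R] [IsLocalRing R] [AddCommGroup M] [Module R M]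
    (h : IsMCM R M) (d : ℕ) (hd : (d : WithBot ℕ∞) = ringKrullDim R) : HasDepth R M d := by
  obtain ⟨-, h | ⟨rs, h1, h2, h3⟩⟩ := h
  · exact hasDepth_of_subsingleton d
  · refine ⟨rs, ?_, ?_, h2⟩
    · rw [← hd] at h3; exact_mod_cast h3
    · rwa [jacobson_eq_maximalIdeal ⊥ bot_ne_top] at h1

lemma HasDepth.localize {R M : Type} [CommRing R] [IsNoetherianRing R] [IsLocalRing R]
    [AddCommGroup M] [Module R M] [Module.Finite R M] (p : PrimeSpectrum R) (n d : ℕ)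
    (h : HasDepth R M d) (hd : (n : ℕ∞) + Order.coheight p ≤ d)
    (M' : Type) [AddCommGroup M'] [Module R M'] [Module (Localization.AtPrime p.asIdeal) M']
    [IsScalarTower R (Localization.AtPrime p.asIdeal) M']
    (f : M →ₗ[R] M') [IsLocalizedModule p.asIdeal.primeCompl f] :
    HasDepth (Localization.AtPrime p.asIdeal) M' n := by
  obtain ⟨rs, h1, h2, h3⟩ := h.exists_seq p n d hd
  refine ⟨rs.map (algebraMap R _), by simpa, ?_,
    h3.of_isLocalizedModule (Localization.AtPrime p.asIdeal) p.asIdeal.primeCompl f⟩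
  simp only [List.mem_map]
  rintro _ ⟨y, hy, rfl⟩
  rw [IsLocalization.AtPrime.to_map_mem_maximal_iff _ p.asIdeal]
  exact h2 y hy

lemma free_localized {R M : Type} [CommRing R] [IsNoetherianRing R] [IsLocalRing R]
    [AddCommGroup M] [Module R M]
    (hCM : IsMCM R R) (hsing : IsolatedSingularity R) (hM : IsMCM R M) (p : PrimeSpectrum R)
    (hp : p.asIdeal ≠ maximalIdeal R) :
    Module.Free (Localization.AtPrime p.asIdeal) (LocalizedModule p.asIdeal.primeCompl M) := by
  have := hM.1
  obtain ⟨d, hd⟩ : ∃ d : ℕ, (d : WithBot ℕ∞) = ringKrullDim R := by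
    obtain ⟨-, h | ⟨rs, h1, h2, h3⟩⟩ := hCM
    · exact absurd h (not_subsingleton R)
    · exact ⟨_, h3⟩
  obtain ⟨-, -, s, hs, hcard⟩ := hsing p.asIdeal p.2
    (by rwa [jacobson_eq_maximalIdeal ⊥ bot_ne_top])
  have hh : (s.card : ℕ∞) + Order.coheight p ≤ d := by
    rw [IsLocalization.AtPrime.ringKrullDim_eq_height p.asIdeal] at hcard
    have h1 : (s.card : ℕ∞) = Order.height p := by
      rw [← PrimeSpectrum.height_eq_orderHeight]
      exact_mod_cast hcard
    rw [h1]
    have h2 : ((Order.height p + Order.coheight p : ℕ∞) : WithBot ℕ∞) ≤ ringKrullDim R := by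
      rw [ringKrullDim, Order.krullDim_eq_iSup_height_add_coheight_of_nonempty]
      exact WithBot.coe_le_coe.mpr (le_iSup (fun a : PrimeSpectrum R =>
        Order.height a + Order.coheight a) p)
    rw [← hd] at h2
    exact_mod_cast h2
  refine free_of_depth (List.replicate s.card 0) s.toList (by simp) ?_ ?_ ?_
  · rw [jacobson_eq_maximalIdeal ⊥ bot_ne_top] at hs
    rw [← hs]
    simp [Ideal.ofList]
  · rw [Finset.length_toList]
    exact (mcm_hasDepth hCM d hd).localize p _ d hh _ (Algebra.linearMap R _)
  · rw [Finset.length_toList]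
    exact (mcm_hasDepth hM d hd).localize p _ d hh _
      (LocalizedModule.mkLinearMap p.asIdeal.primeCompl M)

lemma exists_factor_s10 {R M : Type} [CommRing R] [IsNoetherianRing R] 
    [AddCommGroup M] [Module R M] [Module.Finite R M] (p : Ideal R) [p.IsPrime]
    (hf : Module.Free (Localization.AtPrime p) (LocalizedModule p.primeCompl M)) :
    ∃ u ∉ p, ∃ (n : ℕ) (g : M →ₗ[R] (Fin n → R)) (h : (Fin n → R) →ₗ[R] M),
      h ∘ₗ g = u • LinearMap.id := by
  let A := Localization.AtPrime p
  let S := p.primeCompl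
  let n := Module.finrank A (LocalizedModule p.primeCompl M)
  have : Module.Finite A (LocalizedModule p.primeCompl M) :=
    inferInstance
  let b := Module.finBasis A (LocalizedModule p.primeCompl M)
  let e : LocalizedModule p.primeCompl M ≃ₗ[R] (Fin n → A) := b.equivFun.restrictScalars R
  let f := LocalizedModule.mkLinearMap p.primeCompl M
  let g : (Fin n → R) →ₗ[R] (Fin n → A) := LinearMap.pi fun i =>
    Algebra.linearMap R A ∘ₗ LinearMap.proj i
  have : IsLocalizedModule S g := by
    infer_instance
  have : Module.FinitePresentation R M := Module.finitePresentation_of_finite R M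
  obtain ⟨α, s, hα⟩ := Module.FinitePresentation.exists_lift_of_isLocalizedModule S g
    (e.toLinearMap ∘ₗ f)
  obtain ⟨β, t, hβ⟩ := Module.FinitePresentation.exists_lift_of_isLocalizedModule S f
    (e.symm.toLinearMap ∘ₗ g)
  have H : f ∘ₗ (β ∘ₗ α) = f ∘ₗ ((t * s) • LinearMap.id) := by
    ext m
    have h1 := LinearMap.congr_fun hβ (α m)
    have h2 := LinearMap.congr_fun hα m
    simp only [LinearMap.comp_apply, LinearMap.smul_apply] at h1 h2 ⊢
    rw [h1, h2]
    simp [Submonoid.smul_def, mul_smul]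
  obtain ⟨c, hc⟩ := Module.Finite.exists_smul_of_comp_eq_of_isLocalizedModule S f _ _ H
  refine ⟨c * (t * s), (c * (t * s)).2, n, α, c • β, ?_⟩
  ext m
  have := LinearMap.congr_fun hc m
  simpa [Submonoid.smul_def, mul_smul] using this

theorem isFiniteLength_stHom
    (R : Type) [CommRing R] [IsNoetherianRing R] [IsLocalRing R]
    (hCM : IsMCM R R) (hsing : IsolatedSingularity R)
    (M N : Type) [AddCommGroup M] [Module R M] [AddCommGroup N] [Module R N]
    (hM : IsMCM R M) (hN : IsMCM R N) :
    IsFiniteLength R (StHom R M N) := by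
  have := hM.1
  have := hN.1
  let I := Module.annihilator R (StHom R M N)
  have hI : ∀ p : Ideal R, p.IsPrime → I ≤ p → p = maximalIdeal R := by
    intro p hp hle
    by_contra hne
    obtain ⟨u, hu, n, g, h, hgh⟩ := exists_factor_s10 p (free_localized hCM hsing hM ⟨p, hp⟩ hne)
    apply hu
    apply hle
    rw [Module.mem_annihilator]
    intro y
    obtain ⟨f, rfl⟩ := Submodule.Quotient.mk_surjective _ y
    rw [← Submodule.Quotient.mk_smul, Submodule.Quotient.mk_eq_zero]
    refine Submodule.subset_span ⟨n, g, f ∘ₗ h, ?_⟩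
    rw [LinearMap.comp_assoc, hgh]
    ext; simp
  have hart : IsArtinianRing (R ⧸ I) := by
    rw [isArtinianRing_iff_krullDimLE_zero, Ring.krullDimLE_zero_iff]
    intro J hJ
    have h1 : J.comap (Ideal.Quotient.mk I) = maximalIdeal R :=
      hI _ inferInstance (by
        intro x hx
        rw [Ideal.mem_comap, Ideal.Quotient.eq_zero_iff_mem.mpr hx]
        exact J.zero_mem)
    have h2 : (J.comap (Ideal.Quotient.mk I)).IsMaximal := h1 ▸ inferInstance
    rw [← Ideal.map_comap_of_surjective _ Ideal.Quotient.mk_surjective J]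
    rcases Ideal.map_eq_top_or_isMaximal_of_surjective (Ideal.Quotient.mk I)
      Ideal.Quotient.mk_surjective h2 with h | h
    · rw [Ideal.map_comap_of_surjective _ Ideal.Quotient.mk_surjective J] at h
      exact absurd h hJ.ne_top
    · exact h
  have : IsArtinian R (StHom R M N) := by
    letI : Module (R ⧸ I) (StHom R M N) := Module.quotientAnnihilator
    have : IsScalarTower R (R ⧸ I) (StHom R M N) := ⟨by
      intro a b y
      obtain ⟨b, rfl⟩ := Ideal.Quotient.mk_surjective b
      exact mul_smul a b y⟩
    have : Module.Finite R (StHom R M N) := inferInstance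
    have : Module.Finite (R ⧸ I) (StHom R M N) :=
      Module.Finite.of_restrictScalars_finite R (R ⧸ I) (StHom R M N)
    have h3 : IsArtinian (R ⧸ I) (StHom R M N) := inferInstance
    let e : StHom R M N →ₛₗ[Ideal.Quotient.mk I] StHom R M N := ⟨.id _, fun _ _ ↦ rfl⟩
    exact (e.isArtinian_iff_of_bijective Function.bijective_id).mpr h3
  exact isFiniteLength_iff_isNoetherian_isArtinian.mpr ⟨inferInstance, this⟩

end Paper
end
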